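/- arXiv:1411.3534 — 3 statements merged into one kernel-verified Lean document; each statement's English description precedes it below -/
import Mathlib

section
/- Let m, n, λ be positive integers with m ≤ n and let r ≥ 0. Then, as an identity of rational numbers, f_r(m,n,λ)/r! = Σ_{(a_0,…,a_{m−1}) ∈ ℕ^m, a_0+⋯+a_{m−1} = r} [ ∏_{0 ≤ i < j < m} (a_i − a_j + j − i)/(j − i) ] · ∏_{s=0}^{m−1} λ^{(a_s)} · (n−s)^{(a_s)} / a_s!, where the inner factors (a_i − a_j + j − i) are integers (possibly negative) and the sum is over the finitely many m-tuples of natural numbers summing to r. (This is the coefficient of x^r in the paper's evaluation F(m,n,λ;x) = Σ_{a_0,…,a_{m−1}} ∏_{i<j}((a_i−a_j)/(j−i)+1) ∏_s [Γ(λ+a_s)/Γ(λ)]·[Γ(n−s+a_s)/Γ(n−s)]·x^{a_s}/a_s!.) -/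
open Finset

/-- Number of cycles of a permutation, counting fixed points as cycles of length 1. -/
def cyc {r : ℕ} (σ : Equiv.Perm (Fin r)) : ℕ :=
  σ.cycleType.card + (Finset.univ.filter fun x => σ x = x).card

/-- `f_r(m,n,λ) = Σ_{(σ,τ) ∈ S_r × S_r} m^{cyc σ} n^{cyc τ} λ^{cyc((στ)⁻¹)}`,
summed over all pairs; for `r = 0` this sum is `1`. -/
def fSum (r m n lam : ℕ) : ℕ :=
  ∑ σ : Equiv.Perm (Fin r), ∑ τ : Equiv.Perm (Fin r),
    m ^ cyc σ * n ^ cyc τ * lam ^ cyc (σ * τ)⁻¹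


open Equiv MvPolynomial

/-- Number of `k`-colourings fixed by a permutation. -/
def NN (k : ℕ) {r : ℕ} (σ : Equiv.Perm (Fin r)) : ℕ :=
  ∑ c : Fin r → Fin k, if (∀ z, c (σ z) = c z) then 1 else 0

lemma fix_sameCycle {r : ℕ} {X : Type*} (σ : Equiv.Perm (Fin r)) (c : Fin r → X)
    (h : ∀ z, c (σ z) = c z) {x y : Fin r} (hxy : σ.SameCycle x y) : c x = c y := by
  obtain ⟨i, rfl⟩ := hxy
  have hp : ∀ (n : ℕ) z, c ((σ ^ n) z) = c z := by
    intro n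
    induction n with
    | zero => simp
    | succ n ih => intro z; rw [pow_succ', Perm.mul_apply, h, ih]
  cases i with
  | ofNat n => simpa using (hp n x).symm
  | negSucc n =>
    have := hp (n+1) ((σ ^ (Int.negSucc n)) x)
    rw [← this]
    simp [zpow_negSucc]

lemma card_quot_cyc {r : ℕ} (σ : Equiv.Perm (Fin r)) :
    Nat.card (Quotient (Perm.SameCycle.setoid σ)) = cyc σ := by
  classical
  let T := {g // g ∈ σ.cycleFactorsFinset} ⊕ {x // σ x = x}
  have hT : Nat.card T = cyc σ := by
    simp only [T, Nat.card_eq_fintype_card, Fintype.card_sum, cyc, Perm.cycleType_def]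
    simp [Fintype.card_subtype]
  rw [← hT]
  let F : Fin r → T := fun x => if h : σ x = x then Sum.inr ⟨x, h⟩ else
    Sum.inl ⟨σ.cycleOf x, by
      rw [Perm.cycleOf_mem_cycleFactorsFinset_iff, Perm.mem_support]; exact h⟩
  have hF : ∀ x y, F x = F y ↔ σ.SameCycle x y := by
    intro x y
    by_cases hx : σ x = x
    · by_cases hy : σ y = y
      · simp only [F, hx, hy, dif_pos]
        constructor
        · intro h
          rw [Subtype.mk.inj (Sum.inr.inj h)]
        · intro h
          have := h.eq_of_left hx
          subst this; rfl
      · simp only [F, hx, hy, dif_pos, dif_neg, not_false_eq_true, reduceCtorEq, false_iff]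
        intro h
        have := h.eq_of_left hx
        subst this; exact hy hx
    · by_cases hy : σ y = y
      · simp only [F, hx, hy, dif_pos, dif_neg, not_false_eq_true, reduceCtorEq, false_iff]
        intro h
        have := h.eq_of_right hy
        subst this; exact hx hy
      · simp only [F, hx, hy, dif_neg, not_false_eq_true]
        rw [Perm.sameCycle_iff_cycleOf_eq_of_mem_support (Perm.mem_support.2 hx)
          (Perm.mem_support.2 hy)]
        constructor
        · intro h
          exact Subtype.mk.inj (Sum.inl.inj h)
        · intro h
          congr 2
  refine Nat.card_congr (Equiv.ofBijective
    (Quotient.lift F (fun a b h => (hF a b).2 h)) ⟨?_, ?_⟩)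
  · intro a b
    induction a using Quotient.inductionOn
    induction b using Quotient.inductionOn
    intro h
    exact Quotient.sound ((hF _ _).1 h)
  · rintro (⟨g, hg⟩ | ⟨x, hx⟩)
    · obtain ⟨x, hx⟩ := (Perm.mem_cycleFactorsFinset_iff.1 hg).1.nonempty_support
      refine ⟨Quotient.mk _ x, ?_⟩
      have hgx : g = σ.cycleOf x := Perm.cycle_is_cycleOf hx hg
      have hxx : ¬ σ x = x := by
        rw [← ne_eq, ← Perm.mem_support]
        exact Perm.mem_cycleFactorsFinset_support_le hg hx
      simp only [Quotient.lift_mk, F, hxx, dif_neg, not_false_eq_true, hgx]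
    · exact ⟨Quotient.mk _ x, by simp [F, hx]⟩

lemma pow_cyc (k : ℕ) {r : ℕ} (σ : Equiv.Perm (Fin r)) : k ^ cyc σ = NN k σ := by
  classical
  have h1 : NN k σ = Nat.card {c : Fin r → Fin k // ∀ z, c (σ z) = c z} := by
    rw [NN, Nat.card_eq_fintype_card, Fintype.card_subtype, Finset.card_filter]
  have e : {c : Fin r → Fin k // ∀ z, c (σ z) = c z} ≃
      (Quotient (Perm.SameCycle.setoid σ) → Fin k) :=
    { toFun := fun c => Quotient.lift c.1 (fun a b h => fix_sameCycle σ c.1 c.2 h)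
      invFun := fun f => ⟨fun x => f (Quotient.mk _ x), fun z => by
        refine congrArg f (Quotient.sound ?_)
        exact (Perm.sameCycle_apply_left).2 (Perm.SameCycle.refl _ _)⟩
      left_inv := fun c => by ext; rfl
      right_inv := fun f => by
        funext q
        induction q using Quotient.inductionOn
        rfl }
  rw [h1, Nat.card_congr e, Nat.card_fun, card_quot_cyc]
  simp

lemma fix_inv {r : ℕ} {X : Type*} (σ : Equiv.Perm (Fin r)) (c : Fin r → X) :
    (∀ z, c (σ⁻¹ z) = c z) ↔ ∀ z, c (σ z) = c z := by
  constructor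
  · intro h z
    have := h (σ z)
    simpa using this.symm
  · intro h z
    have := h (σ⁻¹ z)
    simpa using this.symm

lemma NN_inv (k : ℕ) {r : ℕ} (σ : Equiv.Perm (Fin r)) : NN k σ⁻¹ = NN k σ := by
  simp only [NN, fix_inv]

lemma key {r : ℕ} {X : Type*} (c : Fin (r+1) → X) (y : Fin (r+1)) (e : Equiv.Perm (Fin r)) :
    (∀ z, c (Perm.decomposeFin.symm (y, e) z) = c z) ↔
      (∀ z : Fin r, c (e z).succ = c z.succ) ∧ c y = c 0 := by
  rw [Fin.forall_fin_succ]
  simp only [Perm.decomposeFin_symm_apply_zero, Perm.decomposeFin_symm_apply_succ]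
  rw [and_comm]
  apply and_congr_left
  intro h
  have : ∀ x, c (swap 0 y x) = c x := by
    intro x
    rw [swap_apply_def]
    split_ifs with h1 h2
    · rw [h1, h]
    · rw [h2, h]
    · rfl
  simp only [this]

lemma sum_fin_cons {r : ℕ} {X M : Type*} [Fintype X] [AddCommMonoid M] (g : (Fin (r+1) → X) → M) :
    ∑ c, g c = ∑ d : Fin r → X, ∑ x : X, g (Fin.cons x d) := by
  rw [← (Fin.consEquiv (fun _ : Fin (r+1) => X)).sum_comp, Fintype.sum_prod_type, sum_comm]
  rfl

lemma sum_key {r k : ℕ} {M : Type*} [CommSemiring M] (g : (Fin r → Fin k) → M)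
    (y : Fin (r+1)) (e : Equiv.Perm (Fin r)) :
    (∑ c : Fin (r+1) → Fin k, if (∀ z, c (Perm.decomposeFin.symm (y, e) z) = c z) then
        g (fun z => c z.succ) else 0) =
      (if y = 0 then (k : M) else 1) * ∑ d, if (∀ z, d (e z) = d z) then g d else 0 := by
  rw [sum_fin_cons, mul_sum]
  refine sum_congr rfl fun d _ => ?_
  simp only [key, Fin.cons_succ, Fin.cons_zero]
  by_cases h : ∀ z, d (e z) = d z
  · simp only [h, implies_true, true_and, if_true]
    cases y using Fin.cases with
    | zero => simp
    | succ y => simp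
  · simp [h]

lemma NN_decomp (k : ℕ) {r : ℕ} (y : Fin (r+1)) (e : Equiv.Perm (Fin r)) :
    NN k (Perm.decomposeFin.symm (y, e)) = (if y = 0 then k else 1) * NN k e := by
  have := sum_key (M := ℕ) (k := k) (fun _ => 1) y e
  simpa [NN] using this

lemma decomp_eq {r : ℕ} (y : Fin (r+1)) (e : Equiv.Perm (Fin r)) :
    Perm.decomposeFin.symm (y, e) = swap 0 y * Perm.decomposeFin.symm (0, e) := by
  ext z
  congr 1
  cases z using Fin.cases <;> simp

lemma decomp_mul {r : ℕ} (y : Fin (r+1)) (e e' : Equiv.Perm (Fin r)) :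
    Perm.decomposeFin.symm (0, e) * Perm.decomposeFin.symm (y, e') =
      Perm.decomposeFin.symm (Perm.decomposeFin.symm (0, e) y, e * e') := by
  ext z
  congr 1
  cases z using Fin.cases with
  | zero => simp
  | succ z =>
    simp only [Perm.mul_apply, Perm.decomposeFin_symm_apply_succ]
    rw [← Perm.mul_apply, Equiv.mul_swap_eq_swap_mul]
    simp

lemma decomp_inv {r : ℕ} (e : Equiv.Perm (Fin r)) :
    (Perm.decomposeFin.symm (0, e))⁻¹ = Perm.decomposeFin.symm (0, e⁻¹) := by
  rw [inv_eq_iff_mul_eq_one, decomp_mul]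
  ext z
  congr 1
  cases z using Fin.cases <;> simp

/-- convolution of colouring counts -/
def GG (m n : ℕ) {r : ℕ} (ρ : Equiv.Perm (Fin r)) : ℕ :=
  ∑ τ : Equiv.Perm (Fin r), NN n τ * NN m (τ⁻¹ * ρ)

lemma GG_succ (m n : ℕ) {r : ℕ} (ρ : Equiv.Perm (Fin (r+1))) :
    GG m n ρ = ∑ y : Fin (r+1), (if y = 0 then n else 1) *
      ((if (Perm.decomposeFin (swap 0 y * ρ)).1 = 0 then m else 1) *
        GG m n (Perm.decomposeFin (swap 0 y * ρ)).2) := by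
  rw [GG, ← Perm.decomposeFin.symm.sum_comp, Fintype.sum_prod_type]
  refine sum_congr rfl fun y _ => ?_
  rw [GG, mul_sum, mul_sum]
  refine sum_congr rfl fun e _ => ?_
  rw [NN_decomp, decomp_eq y e, mul_inv_rev, swap_inv, mul_assoc (Perm.decomposeFin.symm (0, e))⁻¹, decomp_inv]
  obtain ⟨⟨y', e'⟩, h⟩ := Perm.decomposeFin.symm.surjective (swap 0 y * ρ)
  rw [← h, decomp_mul, NN_decomp]
  simp only [Equiv.apply_symm_apply]
  have : Perm.decomposeFin.symm (0, e⁻¹) y' = 0 ↔ y' = 0 := by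
    cases y' using Fin.cases <;> simp
  simp only [this]
  ring

lemma fSum_eq (r m n lam : ℕ) :
    fSum r m n lam = ∑ ρ : Equiv.Perm (Fin r), NN lam ρ * GG m n ρ := by
  simp only [fSum, pow_cyc, NN_inv, GG]
  rw [sum_comm]
  simp only [mul_sum]
  rw [sum_comm (s := (univ : Finset (Equiv.Perm (Fin r))))
    (f := fun ρ τ => NN lam ρ * (NN n τ * NN m (τ⁻¹ * ρ)))]
  have h : ∀ σ τ : Equiv.Perm (Fin r), NN lam (σ * τ) = NN lam (τ * σ) := by
    intro σ τ
    rw [NN, NN, ← (Equiv.arrowCongr σ (Equiv.refl (Fin lam))).sum_comp]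
    refine sum_congr rfl fun c _ => ?_
    congr 1
    simp only [Equiv.arrowCongr_apply, Equiv.coe_refl, Function.comp_apply, id, Perm.mul_apply,
      Equiv.symm_apply_apply, eq_iff_iff]
    constructor
    · intro h z
      simpa using h (σ z)
    · intro h z
      simpa using h (σ.symm z)
  refine sum_congr rfl fun τ _ => ?_
  rw [← Equiv.sum_comp (Equiv.mulLeft τ) (fun ρ => NN lam ρ * (NN n τ * NN m (τ⁻¹ * ρ)))]
  refine sum_congr rfl fun σ _ => ?_
  simp only [Equiv.coe_mulLeft, inv_mul_cancel_left, h σ τ]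
  ring

/-- sum over a coloured stabilizer -/
lemma stab_sum (m lam : ℕ) : ∀ (r : ℕ) (c : Fin r → Fin m),
    (∑ ρ : Equiv.Perm (Fin r), if (∀ z, c (ρ z) = c z) then NN lam ρ else 0) =
      ∏ s : Fin m, lam.ascFactorial (univ.filter fun z => c z = s).card := by
  intro r
  induction r with
  | zero => intro c; simp [NN]
  | succ r ih =>
    intro c
    have hr : ∀ s, (univ.filter fun z => c z = s).card =
        (univ.filter fun z : Fin r => c z.succ = s).card + if s = c 0 then 1 else 0 := by
      intro s
      rw [Finset.card_filter, Finset.card_filter, Fin.sum_univ_succ, add_comm]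
      simp only [eq_comm]
    have hp : ∏ s : Fin m, lam.ascFactorial (univ.filter fun z => c z = s).card =
        (lam + (univ.filter fun z : Fin r => c z.succ = c 0).card) *
        ∏ s : Fin m, lam.ascFactorial (univ.filter fun z : Fin r => c z.succ = s).card := by
      rw [← Finset.mul_prod_erase _ _ (mem_univ (c 0)),
        ← Finset.mul_prod_erase _ (fun s => lam.ascFactorial
          (univ.filter fun z : Fin r => c z.succ = s).card) (mem_univ (c 0)), ← mul_assoc]
      congr 1
      · rw [hr]; simp [Nat.ascFactorial_succ]
      · refine prod_congr rfl fun s hs => ?_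
        rw [hr, if_neg (ne_of_mem_erase hs), add_zero]
    rw [hp, ← ih (fun z => c z.succ), ← Perm.decomposeFin.symm.sum_comp, Fintype.sum_prod_type]
    simp only [key, NN_decomp]
    rw [Fin.sum_univ_succ, add_mul, Finset.card_filter, sum_mul]
    congr 1
    · simp [mul_sum]
    · refine sum_congr rfl fun y _ => ?_
      by_cases h : c y.succ = c 0 <;> simp [h]

/-- weight of a colouring, omitting the point `0` -/
noncomputable def wt {m r : ℕ} (c : Fin (r+1) → Fin m) : MvPolynomial (Fin m) ℚ :=
  ∏ z : Fin r, X (c z.succ)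

noncomputable def PP (m : ℕ) {r : ℕ} (ρ : Equiv.Perm (Fin r)) : MvPolynomial (Fin m) ℚ :=
  ∑ c : Fin r → Fin m, if (∀ z, c (ρ z) = c z) then ∏ z, X (c z) else 0

noncomputable def WW (m : ℕ) {r : ℕ} (ρ : Equiv.Perm (Fin (r+1))) : MvPolynomial (Fin m) ℚ :=
  ∑ c : Fin (r+1) → Fin m, if (∀ z, c (ρ z) = c z) then wt c else 0

noncomputable def vv {m : ℕ} {r : ℕ} (ρ : Equiv.Perm (Fin (r+1))) (i : Fin m) :
    MvPolynomial (Fin m) ℚ :=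
  ∑ c : Fin (r+1) → Fin m, if (∀ z, c (ρ z) = c z) ∧ c 0 = i then wt c else 0

noncomputable def SS {m : ℕ} {r : ℕ} (ρ : Equiv.Perm (Fin (r+1))) (i j : Fin m)
    (a : Fin (r+1)) : MvPolynomial (Fin m) ℚ :=
  ∑ c : Fin (r+1) → Fin m, if (∀ z, c ((ρ * swap 0 a) z) = c z) ∧ c 0 = i ∧ c a = j
    then wt c else 0

lemma wt_update_zero {m r : ℕ} (c : Fin (r+1) → Fin m) (j : Fin m) :
    wt (Function.update c 0 j) = wt c := by
  simp [wt]

lemma wt_update {m r : ℕ} (c : Fin (r+1) → Fin m) (i j : Fin m) (p : Fin (r+1)) (hp : p ≠ 0)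
    (h : c p = i) : X i * wt (Function.update c p j) = X j * wt c := by
  obtain ⟨q, rfl⟩ := Fin.exists_succ_eq_of_ne_zero hp
  rw [wt, wt, ← Finset.mul_prod_erase _ _ (mem_univ q),
    ← Finset.mul_prod_erase _ (fun z : Fin r => (X (c z.succ) : MvPolynomial (Fin m) ℚ))
      (mem_univ q), h]
  have : ∏ x ∈ univ.erase q, (X (Function.update c q.succ j x.succ) : MvPolynomial (Fin m) ℚ)
      = ∏ x ∈ univ.erase q, X (c x.succ) := by
    refine prod_congr rfl fun x hx => ?_
    rw [Function.update_of_ne]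
    simpa using ne_of_mem_erase hx
  rw [this, Function.update_self]
  ring

lemma fix_swap {m r : ℕ} (ρ : Equiv.Perm (Fin (r+1))) (c : Fin (r+1) → Fin m)
    (a : Fin (r+1)) (ha : a ≠ 0) :
    (∀ z, c ((ρ * swap 0 a) z) = c z) ↔
      c (ρ a) = c 0 ∧ c (ρ 0) = c a ∧ ∀ z, z ≠ 0 → z ≠ a → c (ρ z) = c z := by
  constructor
  · intro h
    refine ⟨by simpa using h 0, by simpa using h a, fun z h0 h1 => ?_⟩
    have := h z
    rwa [Perm.mul_apply, swap_apply_of_ne_of_ne h0 h1] at this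
  · rintro ⟨h1, h2, h3⟩ z
    rw [Perm.mul_apply, swap_apply_def]
    split_ifs with h4 h5
    · rw [h4, h1]
    · rw [h5, h2]
    · exact h3 z h4 h5

lemma tele_step {m r : ℕ} (ρ : Equiv.Perm (Fin (r+1))) (i j : Fin m) (hij : i ≠ j)
    (z : Fin (r+1)) :
    X i * SS ρ i j (ρ z) = X j * (SS ρ i j z + if z = 0 then vv ρ i else 0)
      - if ρ z = 0 then X j * vv ρ j else 0 := by
  have hS0 : SS ρ i j 0 = 0 := by
    rw [SS]
    refine sum_eq_zero fun c _ => if_neg ?_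
    rintro ⟨-, h1, h2⟩
    exact hij (h1.symm.trans h2)
  by_cases hz : z = 0
  · subst hz
    rw [hS0, zero_add, if_pos rfl]
    by_cases h0 : ρ 0 = 0
    · rw [if_pos h0, h0, hS0, vv, vv, ← Finset.sum_filter, ← Finset.sum_filter, mul_zero, eq_comm,
        sub_eq_zero]
      congr 1
      refine Finset.sum_nbij' (fun c => Function.update c 0 j) (fun c => Function.update c 0 i)
        ?_ ?_ ?_ ?_ ?_
      · intro c hc
        simp only [mem_filter, mem_univ, true_and] at hc ⊢
        refine ⟨fun y => ?_, by simp⟩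
        by_cases hy : y = 0
        · rw [hy, h0]
        · have : ρ y ≠ 0 := fun h => hy (ρ.injective (h.trans h0.symm))
          simp [hy, this, hc.1]
      · intro c hc
        simp only [mem_filter, mem_univ, true_and] at hc ⊢
        refine ⟨fun y => ?_, by simp⟩
        by_cases hy : y = 0
        · rw [hy, h0]
        · have : ρ y ≠ 0 := fun h => hy (ρ.injective (h.trans h0.symm))
          simp [hy, this, hc.1]
      · intro c hc
        simp only [mem_filter, mem_univ, true_and] at hc
        simp [← hc.2]
      · intro c hc
        simp only [mem_filter, mem_univ, true_and] at hc
        simp [← hc.2]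
      · intro c _
        rw [wt_update_zero]
    · rw [if_neg h0, sub_zero, SS, vv, ← Finset.sum_filter, ← Finset.sum_filter, mul_sum, mul_sum]
      symm
      refine Finset.sum_nbij' (fun c => Function.update c (ρ 0) j)
        (fun c => Function.update c (ρ 0) i) ?_ ?_ ?_ ?_ ?_
      · intro c hc
        simp only [mem_filter, mem_univ, true_and, fix_swap _ _ _ h0] at hc ⊢
        simp only [Function.update_apply, ρ.injective.eq_iff]
        grind
      · intro c hc
        simp only [mem_filter, mem_univ, true_and, fix_swap _ _ _ h0] at hc ⊢
        simp only [Function.update_apply, ρ.injective.eq_iff]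
        grind
      · intro c hc
        simp only [mem_filter, mem_univ, true_and] at hc
        grind
      · intro c hc
        simp only [mem_filter, mem_univ, true_and] at hc
        grind
      · intro c hc
        simp only [mem_filter, mem_univ, true_and] at hc
        rw [wt_update _ i _ _ h0]
        grind
  · rw [if_neg hz, add_zero]
    by_cases h0 : ρ z = 0
    · rw [if_pos h0, h0, hS0, SS, vv, ← Finset.sum_filter, ← Finset.sum_filter, mul_zero, eq_comm,
        sub_eq_zero]
      congr 1
      refine Finset.sum_nbij' (fun c => Function.update c 0 j)
        (fun c => Function.update c 0 i) ?_ ?_ ?_ ?_ ?_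
      · intro c hc
        simp only [mem_filter, mem_univ, true_and, fix_swap _ _ _ hz] at hc ⊢
        have hy : ∀ y, ρ y = 0 ↔ y = z := fun y => by rw [← h0, ρ.injective.eq_iff]
        simp only [Function.update_apply, hy]
        grind
      · intro c hc
        simp only [mem_filter, mem_univ, true_and, fix_swap _ _ _ hz] at hc ⊢
        have hy : ∀ y, ρ y = 0 ↔ y = z := fun y => by rw [← h0, ρ.injective.eq_iff]
        simp only [Function.update_apply, hy]
        grind
      · intro c hc
        simp only [mem_filter, mem_univ, true_and] at hc
        grind
      · intro c hc
        simp only [mem_filter, mem_univ, true_and] at hc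
        grind
      · intro c hc
        rw [wt_update_zero]
    · rw [if_neg h0, sub_zero, SS, SS, ← Finset.sum_filter, ← Finset.sum_filter, mul_sum, mul_sum]
      symm
      refine Finset.sum_nbij' (fun c => Function.update c (ρ z) j)
        (fun c => Function.update c (ρ z) i) ?_ ?_ ?_ ?_ ?_
      · intro c hc
        simp only [mem_filter, mem_univ, true_and, fix_swap _ _ _ h0, fix_swap _ _ _ hz] at hc ⊢
        simp only [Function.update_apply, ρ.injective.eq_iff]
        grind
      · intro c hc
        simp only [mem_filter, mem_univ, true_and, fix_swap _ _ _ h0, fix_swap _ _ _ hz] at hc ⊢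
        simp only [Function.update_apply, ρ.injective.eq_iff]
        grind
      · intro c hc
        simp only [mem_filter, mem_univ, true_and, fix_swap _ _ _ hz] at hc
        grind
      · intro c hc
        simp only [mem_filter, mem_univ, true_and, fix_swap _ _ _ h0] at hc
        grind
      · intro c hc
        simp only [mem_filter, mem_univ, true_and, fix_swap _ _ _ hz] at hc
        rw [wt_update _ i _ _ h0]
        grind

lemma tele {m r : ℕ} (ρ : Equiv.Perm (Fin (r+1))) (i j : Fin m) (hij : i ≠ j) :
    (X i - X j) * ∑ a : Fin r, SS ρ i j a.succ = X j * (vv ρ i - vv ρ j) := by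
  have hS0 : SS ρ i j 0 = 0 := by
    rw [SS]
    refine sum_eq_zero fun c _ => if_neg ?_
    rintro ⟨-, h1, h2⟩
    exact hij (h1.symm.trans h2)
  have h1 : ∑ a : Fin r, SS ρ i j a.succ = ∑ a, SS ρ i j a := by
    rw [Fin.sum_univ_succ, hS0, zero_add]
  have h2 : ∑ z, X i * SS ρ i j (ρ z) = ∑ z, (X j * (SS ρ i j z + if z = 0 then vv ρ i else 0)
      - if ρ z = 0 then X j * vv ρ j else 0) := sum_congr rfl fun z _ => tele_step ρ i j hij z
  rw [Equiv.sum_comp ρ (fun z => X i * SS ρ i j z), sum_sub_distrib,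
    Equiv.sum_comp ρ (fun z => if z = 0 then X j * vv ρ j else 0), ← mul_sum, ← mul_sum,
    sum_add_distrib] at h2
  simp only [sum_ite_eq', mem_univ, if_true] at h2
  rw [h1]
  linear_combination h2

lemma deriv_prod_general {m : ℕ} {ι : Type*} [DecidableEq ι] (s : Finset ι)
    (f : ι → MvPolynomial (Fin m) ℚ) (i : Fin m) :
    pderiv i (∏ a ∈ s, f a) = ∑ a ∈ s, (∏ b ∈ s.erase a, f b) * pderiv i (f a) := by
  induction s using Finset.induction_on with
  | empty => simp
  | insert a s ha ih =>
    rw [prod_insert ha, Derivation.leibniz, ih, sum_insert ha, erase_insert ha, smul_eq_mul,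
      smul_eq_mul, mul_sum, add_comm]
    congr 1
    refine sum_congr rfl fun b hb => ?_
    have : a ≠ b := fun h => ha (h ▸ hb)
    rw [erase_insert_of_ne this, prod_insert (by simp [ha]), mul_assoc]

lemma X_pderiv_wt {m r : ℕ} (c : Fin (r+1) → Fin m) (i : Fin m) :
    X i * pderiv i (wt c) = ∑ a : Fin r, if c a.succ = i then wt c else 0 := by
  rw [wt, deriv_prod_general, mul_sum]
  refine sum_congr rfl fun a _ => ?_
  rw [pderiv_X]
  by_cases h : c a.succ = i
  · rw [if_pos h, ← Finset.mul_prod_erase _ _ (mem_univ a), h]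
    simp
  · simp [h, Pi.single_apply, Ne.symm h]

lemma WW_split {m r : ℕ} (ρ : Equiv.Perm (Fin (r+1))) :
    ∑ a : Fin r, WW m (ρ * swap 0 a.succ) =
      (∑ i, X i * pderiv i (vv ρ i)) +
      ∑ i : Fin m, ∑ j : Fin m, if i = j then 0 else ∑ a : Fin r, SS ρ i j a.succ := by
  have h1 : ∑ i, X i * pderiv i (vv (m := m) ρ i) = ∑ a : Fin r, ∑ c : Fin (r+1) → Fin m,
      if (∀ z, c (ρ z) = c z) ∧ c 0 = c a.succ then wt c else 0 := by
    rw [sum_comm]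
    simp only [vv, map_sum, mul_sum]
    rw [sum_comm]
    refine sum_congr rfl fun c _ => ?_
    by_cases h : ∀ z, c (ρ z) = c z
    · simp only [h, implies_true, true_and]
      rw [Finset.sum_eq_single (c 0)]
      · rw [if_pos rfl, X_pderiv_wt]
        simp only [eq_comm]
      · intro b _ hb
        rw [if_neg (Ne.symm hb)]; simp
      · simp
    · simp [h]
  have h2 : (∑ i : Fin m, ∑ j : Fin m, if i = j then 0 else ∑ a : Fin r, SS ρ i j a.succ) =
      ∑ a : Fin r, ∑ c : Fin (r+1) → Fin m,
      if (∀ z, c ((ρ * swap 0 a.succ) z) = c z) ∧ c 0 ≠ c a.succ then wt c else 0 := by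
    have : ∀ i j : Fin m, (if i = j then 0 else ∑ a : Fin r, SS ρ i j a.succ) =
      ∑ a : Fin r, ∑ c : Fin (r+1) → Fin m, if (∀ z, c ((ρ * swap 0 a.succ) z) = c z) ∧ i ≠ j ∧
        c 0 = i ∧ c a.succ = j then wt c else 0 := by
      intro i j
      by_cases h : i = j
      · simp [h]
      · rw [if_neg h]
        refine sum_congr rfl fun a _ => ?_
        rw [SS]
        refine sum_congr rfl fun c _ => ?_
        refine if_congr ?_ rfl rfl
        tauto
    calc _ = ∑ i : Fin m, ∑ j : Fin m, ∑ a : Fin r, ∑ c : Fin (r+1) → Fin m,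
          if (∀ z, c ((ρ * swap 0 a.succ) z) = c z) ∧ i ≠ j ∧
          c 0 = i ∧ c a.succ = j then wt c else 0 :=
          sum_congr rfl fun i _ => sum_congr rfl fun j _ => this i j
      _ = ∑ i : Fin m, ∑ a : Fin r, ∑ j : Fin m, ∑ c : Fin (r+1) → Fin m,
          if (∀ z, c ((ρ * swap 0 a.succ) z) = c z) ∧ i ≠ j ∧
          c 0 = i ∧ c a.succ = j then wt c else 0 := sum_congr rfl fun i _ => sum_comm
      _ = ∑ a : Fin r, ∑ i : Fin m, ∑ j : Fin m, ∑ c : Fin (r+1) → Fin m,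
          if (∀ z, c ((ρ * swap 0 a.succ) z) = c z) ∧ i ≠ j ∧
          c 0 = i ∧ c a.succ = j then wt c else 0 := sum_comm
      _ = ∑ a : Fin r, ∑ i : Fin m, ∑ c : Fin (r+1) → Fin m, ∑ j : Fin m,
          if (∀ z, c ((ρ * swap 0 a.succ) z) = c z) ∧ i ≠ j ∧
          c 0 = i ∧ c a.succ = j then wt c else 0 :=
            sum_congr rfl fun a _ => sum_congr rfl fun i _ => sum_comm
      _ = ∑ a : Fin r, ∑ c : Fin (r+1) → Fin m, ∑ i : Fin m, ∑ j : Fin m,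
          if (∀ z, c ((ρ * swap 0 a.succ) z) = c z) ∧ i ≠ j ∧
          c 0 = i ∧ c a.succ = j then wt c else 0 :=
            sum_congr rfl fun a _ => sum_comm
      _ = _ := by
        refine sum_congr rfl fun a _ => sum_congr rfl fun c _ => ?_
        rw [Finset.sum_eq_single (c 0), Finset.sum_eq_single (c a.succ)]
        · refine if_congr ?_ rfl rfl
          tauto
        · intro b _ hb
          rw [if_neg]
          rintro ⟨_, _, _, h⟩
          exact hb h.symm
        · simp
        · intro b _ hb
          refine sum_eq_zero fun j _ => ?_
          rw [if_neg]
          rintro ⟨_, _, h, _⟩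
          exact hb h.symm
        · simp
  rw [h1, h2, ← sum_add_distrib]
  refine sum_congr rfl fun a _ => ?_
  rw [WW, ← sum_add_distrib]
  refine sum_congr rfl fun c _ => ?_
  have h0 : a.succ ≠ 0 := Fin.succ_ne_zero a
  by_cases h : c 0 = c a.succ
  · have : (∀ z, c ((ρ * swap 0 a.succ) z) = c z) ↔ (∀ z, c (ρ z) = c z) := by
      rw [fix_swap _ _ _ h0]
      grind
    simp only [this, h, and_true, ne_eq, not_true_eq_false, and_false, if_false, add_zero]
  · simp only [h, ne_eq, not_false_eq_true, and_true, and_false, if_false, zero_add]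

/-- the Laguerre-type linear functional -/
noncomputable def ell (m α : ℕ) : MvPolynomial (Fin m) ℚ →ₗ[ℚ] ℚ :=
  (basisMonomials (Fin m) ℚ).constr ℚ (fun b => ∏ i, ((b i + α).factorial : ℚ))

lemma ell_monomial {m α : ℕ} (b : Fin m →₀ ℕ) (q : ℚ) :
    ell m α (monomial b q) = q * ∏ i, ((b i + α).factorial : ℚ) := by
  have h1 : monomial b q = q • (basisMonomials (Fin m) ℚ) b := by
    simp [smul_monomial]
  rw [h1, map_smul, ell, Module.Basis.constr_basis, smul_eq_mul]

lemma ell_X_mul {m α : ℕ} (i : Fin m) (p : MvPolynomial (Fin m) ℚ) :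
    ell m α (X i * p) = (α + 1) * ell m α p + ell m α (X i * pderiv i p) := by
  induction p using MvPolynomial.induction_on' with
  | monomial b q =>
    rw [X_mul_pderiv_monomial, map_nsmul, X, monomial_mul, one_mul, ell_monomial, ell_monomial,
      ← Finset.mul_prod_erase _ _ (mem_univ i),
      ← Finset.mul_prod_erase _ (fun i => ((b i + α).factorial : ℚ)) (mem_univ i)]
    have : ∏ x ∈ univ.erase i, ((((Finsupp.single i 1 + b : Fin m →₀ ℕ) x + α).factorial : ℕ) : ℚ)
        = ∏ x ∈ univ.erase i, ((b x + α).factorial : ℚ) := by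
      refine prod_congr rfl fun x hx => ?_
      have := ne_of_mem_erase hx
      simp [Finsupp.single_apply, this.symm]
    rw [this]
    have h2 : (Finsupp.single i 1 + b : Fin m →₀ ℕ) i + α = (b i + α) + 1 := by
      simp; ring
    rw [h2, Nat.factorial_succ]
    push_cast
    simp only [nsmul_eq_mul]
    ring
  | add p q hp hq =>
    simp only [mul_add, map_add, hp, hq]
    ring

lemma ell_rename {m α : ℕ} (π : Perm (Fin m)) (p : MvPolynomial (Fin m) ℚ) :
    ell m α (rename π p) = ell m α p := by
  induction p using MvPolynomial.induction_on' with
  | monomial b q =>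
    rw [rename_monomial, ell_monomial, ell_monomial]
    congr 1
    rw [← Equiv.prod_comp π]
    refine prod_congr rfl fun i _ => ?_
    rw [Finsupp.mapDomain_apply π.injective]
  | add p q hp hq =>
    simp only [map_add, hp, hq]

noncomputable def DD (m : ℕ) : MvPolynomial (Fin m) ℚ :=
  ∏ p ∈ Finset.univ.filter (fun p : Fin m × Fin m => p.1 < p.2), (X p.2 - X p.1)

lemma sum_pairs {m : ℕ} {M : Type*} [AddCommMonoid M] (g : Fin m → Fin m → M) :
    ∑ p ∈ Finset.univ.filter (fun p : Fin m × Fin m => p.1 < p.2), (g p.1 p.2 + g p.2 p.1)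
      = ∑ i, ∑ j, if i = j then 0 else g i j := by
  rw [← Fintype.sum_prod_type' (fun i j => if i = j then 0 else g i j), sum_add_distrib]
  have h2 : ∑ p ∈ Finset.univ.filter (fun p : Fin m × Fin m => p.1 < p.2), g p.2 p.1
      = ∑ p ∈ Finset.univ.filter (fun p : Fin m × Fin m => p.2 < p.1), g p.1 p.2 := by
    refine Finset.sum_nbij' Prod.swap Prod.swap ?_ ?_ ?_ ?_ ?_ <;> simp
  rw [h2, sum_filter, sum_filter, ← sum_add_distrib]
  refine sum_congr rfl fun p _ => ?_
  rcases lt_trichotomy p.1 p.2 with h | h | h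
  · simp [h, h.ne, h.not_gt]
  · simp [h]
  · simp [h, h.ne', h.not_gt]

lemma sum_X_v_deriv {m : ℕ} (v : Fin m → MvPolynomial (Fin m) ℚ)
    (B : Fin m → Fin m → MvPolynomial (Fin m) ℚ)
    (hB : ∀ i j, i ≠ j → (X i - X j) * B i j = X j * (v i - v j)) :
    2 * ∑ i, X i * v i * pderiv i (DD m) =
      DD m * ((∑ i, ∑ j, if i = j then 0 else B i j) + ((m : MvPolynomial (Fin m) ℚ) - 1) * ∑ i, v i) := by
  have h1 : ((∑ i, ∑ j, if i = j then 0 else B i j) +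
      ((m : MvPolynomial (Fin m) ℚ) - 1) * ∑ i, v i) =
      ∑ i, ∑ j, if i = j then 0 else (B i j + v i) := by
    rw [mul_sum, ← sum_add_distrib]
    refine sum_congr rfl fun i _ => ?_
    have : (((m : MvPolynomial (Fin m) ℚ) - 1) * v i) = ∑ j, if i = j then 0 else v i := by
      have h3 : ∑ j : Fin m, (if i = j then 0 else v i) = ∑ j : Fin m, (v i - if i = j then v i else 0) := by
        refine sum_congr rfl fun j _ => ?_
        split_ifs <;> simp
      rw [h3, sum_sub_distrib]
      simp
      ring
    rw [this, ← sum_add_distrib]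
    refine sum_congr rfl fun j _ => ?_
    split_ifs <;> simp
  rw [h1, ← sum_pairs (fun i j => B i j + v i)]
  have h2 : ∑ i, X i * v i * pderiv i (DD m) =
      ∑ p ∈ Finset.univ.filter (fun p : Fin m × Fin m => p.1 < p.2),
        (∏ q ∈ (Finset.univ.filter (fun p : Fin m × Fin m => p.1 < p.2)).erase p,
          (X q.2 - X q.1)) * (X p.2 * v p.2 - X p.1 * v p.1) := by
    simp only [DD, deriv_prod_general, mul_sum]
    rw [sum_comm]
    refine sum_congr rfl fun p hp => ?_
    have : ∀ i, X i * v i * ((∏ q ∈ (Finset.univ.filter (fun p : Fin m × Fin m => p.1 < p.2)).erase p,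
          (X q.2 - X q.1)) * pderiv i (X p.2 - X p.1 : MvPolynomial (Fin m) ℚ)) =
        (∏ q ∈ (Finset.univ.filter (fun p : Fin m × Fin m => p.1 < p.2)).erase p,
          (X q.2 - X q.1)) * ((if i = p.2 then X i * v i else 0) - (if i = p.1 then X i * v i else 0)) := by
      intro i
      rw [map_sub, pderiv_X, pderiv_X, Pi.single_apply, Pi.single_apply]
      simp only [eq_comm (b := i)]
      split_ifs <;> ring
    rw [sum_congr rfl fun i _ => this i, ← mul_sum, sum_sub_distrib]
    simp
  rw [h2, mul_sum, mul_sum]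
  refine sum_congr rfl fun p hp => ?_
  rw [DD, ← Finset.mul_prod_erase _ _ hp]
  have hlt : p.1 < p.2 := by simpa using hp
  linear_combination (∏ q ∈ (Finset.univ.filter (fun p : Fin m × Fin m => p.1 < p.2)).erase p,
          (X q.2 - X q.1 : MvPolynomial (Fin m) ℚ)) * (hB p.1 p.2 hlt.ne - hB p.2 p.1 hlt.ne')

lemma PP_eq {m r : ℕ} (ρ : Perm (Fin (r+1))) : PP m ρ = ∑ i, X i * vv ρ i := by
  simp only [vv, mul_sum]
  rw [sum_comm, PP]
  refine sum_congr rfl fun c _ => ?_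
  rw [Finset.sum_eq_single (c 0)]
  · simp only [and_true, Fin.prod_univ_succ, wt]
    split_ifs <;> simp
  · intro b _ hb
    rw [if_neg fun h => hb h.2.symm, mul_zero]
  · simp

lemma WW_eq {m r : ℕ} (ρ : Perm (Fin (r+1))) : WW m ρ = ∑ i, vv ρ i := by
  simp only [vv]
  rw [sum_comm, WW]
  refine sum_congr rfl fun c _ => ?_
  rw [Finset.sum_eq_single (c 0)]
  · simp only [and_true]
  · intro b _ hb
    rw [if_neg fun h => hb h.2.symm]
  · simp

lemma loop_eq {m r : ℕ} (α : ℕ) (ρ : Perm (Fin (r+1))) :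
    ell m α (PP m ρ * DD m ^ 2) = (m + α) * ell m α (WW m ρ * DD m ^ 2) +
      ∑ a : Fin r, ell m α (WW m (ρ * swap 0 a.succ) * DD m ^ 2) := by
  have h1 : ∑ i, X i * pderiv i (vv ρ i * DD m ^ 2) =
      ((∑ a : Fin r, WW m (ρ * swap 0 a.succ)) + ((m : MvPolynomial (Fin m) ℚ) - 1) * WW m ρ)
        * DD m ^ 2 := by
    have h := sum_X_v_deriv (vv (m := m) ρ) (fun i j => ∑ a : Fin r, SS ρ i j a.succ)
      (fun i j hij => tele ρ i j hij)
    rw [WW_split, WW_eq]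
    have h3 : ∀ i, X i * pderiv i (vv ρ i * DD m ^ 2) =
        DD m ^ 2 * (X i * pderiv i (vv ρ i)) + DD m * (2 * (X i * vv ρ i * pderiv i (DD m))) := by
      intro i
      rw [pow_two, Derivation.leibniz, Derivation.leibniz]
      simp only [smul_eq_mul]
      ring
    rw [sum_congr rfl fun i _ => h3 i, sum_add_distrib, ← mul_sum, ← mul_sum, ← mul_sum, h]
    ring
  have h2 : ell m α (PP m ρ * DD m ^ 2) = (α + 1) * ell m α (WW m ρ * DD m ^ 2) +
      ell m α (∑ i, X i * pderiv i (vv ρ i * DD m ^ 2)) := by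
    rw [PP_eq, WW_eq, sum_mul, sum_mul, map_sum, map_sum, map_sum, mul_sum, ← sum_add_distrib]
    refine sum_congr rfl fun i _ => ?_
    rw [mul_assoc, ell_X_mul]
  rw [h2, h1, ← map_sum, ← sum_mul, add_mul (∑ a : Fin r, _), map_add]
  have h4 : ((m : MvPolynomial (Fin m) ℚ) - 1) * WW m ρ * DD m ^ 2 =
      ((m : ℚ) - 1) • (WW m ρ * DD m ^ 2) := by
    rw [MvPolynomial.smul_eq_C_mul]
    simp
    ring
  rw [h4, map_smul, smul_eq_mul]
  ring

lemma WW_decomp {m r : ℕ} (κ : Perm (Fin (r+1))) :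
    WW m κ = ((if (Perm.decomposeFin κ).1 = 0 then m else 1 : ℕ) : MvPolynomial (Fin m) ℚ) *
      PP m (Perm.decomposeFin κ).2 := by
  have h := sum_key (k := m) (fun d : Fin r → Fin m => ∏ z, (X (d z) : MvPolynomial (Fin m) ℚ))
    (Perm.decomposeFin κ).1 (Perm.decomposeFin κ).2
  rw [Prod.mk.eta, Equiv.symm_apply_apply] at h
  rw [WW, PP]
  simp only [wt]
  rw [h]
  push_cast
  rfl

lemma PP_inv {m r : ℕ} (ρ : Perm (Fin r)) : PP m ρ⁻¹ = PP m ρ := by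
  simp only [PP, fix_inv]

lemma WW_inv {m r : ℕ} (ρ : Perm (Fin (r+1))) : WW m ρ⁻¹ = WW m ρ := by
  simp only [WW, fix_inv]

lemma GG_ell (m α : ℕ) : ∀ (r : ℕ) (ρ : Perm (Fin r)),
    ell m α (DD m ^ 2) * (GG m (m + α) ρ : ℚ) = ell m α (PP m ρ * DD m ^ 2) := by
  intro r
  induction r with
  | zero =>
    intro ρ
    simp [GG, NN, PP]
  | succ r ih =>
    intro ρ
    have hW : ∀ y, ell m α (DD m ^ 2) * ((if (Perm.decomposeFin (swap 0 y * ρ)).1 = 0 then (m : ℚ) else 1) *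
        (GG m (m + α) (Perm.decomposeFin (swap 0 y * ρ)).2 : ℚ)) =
        ell m α (WW m (ρ⁻¹ * swap 0 y) * DD m ^ 2) := by
      intro y
      have : ρ⁻¹ * swap 0 y = (swap 0 y * ρ)⁻¹ := by
        rw [mul_inv_rev, swap_inv]
      rw [this, WW_inv, WW_decomp, mul_assoc, ← nsmul_eq_mul, map_nsmul, ← ih, nsmul_eq_mul]
      push_cast
      ring
    have h := loop_eq (m := m) α ρ⁻¹
    rw [PP_inv] at h
    rw [h, GG_succ]
    push_cast
    rw [mul_sum]
    have h2 : ∀ y : Fin (r+1), ell m α (DD m ^ 2) * ((if y = 0 then ((m : ℚ) + α) else 1) *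
        ((if (Perm.decomposeFin (swap 0 y * ρ)).1 = 0 then (m : ℚ) else 1) *
        (GG m (m + α) (Perm.decomposeFin (swap 0 y * ρ)).2 : ℚ))) =
        (if y = 0 then ((m : ℚ) + α) else 1) * ell m α (WW m (ρ⁻¹ * swap 0 y) * DD m ^ 2) := by
      intro y
      rw [← hW]
      ring
    rw [sum_congr rfl fun y _ => h2 y, Fin.sum_univ_succ]
    have hs : swap (0 : Fin (r+1)) 0 = 1 := swap_self 0
    rw [hs, mul_one]
    simp

noncomputable def HH (m lam r : ℕ) : MvPolynomial (Fin m) ℚ :=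
  ∑ c : Fin r → Fin m, C (∏ s, (lam.ascFactorial (univ.filter fun z => c z = s).card : ℚ)) *
    ∏ z, X (c z)

lemma HH_eq (m lam r : ℕ) :
    ∑ ρ : Perm (Fin r), (NN lam ρ : MvPolynomial (Fin m) ℚ) * PP m ρ = HH m lam r := by
  simp only [PP, mul_sum]
  rw [sum_comm, HH]
  refine sum_congr rfl fun c _ => ?_
  have h := congrArg (fun x : ℕ => (x : MvPolynomial (Fin m) ℚ)) (stab_sum m lam r c)
  simp only [Nat.cast_sum, Nat.cast_prod, Nat.cast_ite, Nat.cast_zero] at h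
  simp only [map_prod, map_natCast]
  rw [← h, sum_mul]
  refine sum_congr rfl fun ρ _ => ?_
  split_ifs <;> simp

lemma fSum_ell (m α lam r : ℕ) :
    ell m α (DD m ^ 2) * (fSum r m (m + α) lam : ℚ) = ell m α (HH m lam r * DD m ^ 2) := by
  rw [fSum_eq, ← HH_eq, sum_mul, map_sum]
  push_cast
  rw [mul_sum]
  refine sum_congr rfl fun ρ _ => ?_
  rw [mul_assoc, ← nsmul_eq_mul (NN lam ρ) (PP m ρ * _), map_nsmul, ← GG_ell, nsmul_eq_mul]
  ring

lemma prod_pairs {m : ℕ} {M : Type*} [CommMonoid M] (g : Fin m → Fin m → M) :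
    ∏ p ∈ Finset.univ.filter (fun p : Fin m × Fin m => p.1 < p.2), g p.1 p.2
      = ∏ i, ∏ j ∈ Ioi i, g i j := by
  rw [prod_filter, Fintype.prod_prod_type]
  refine prod_congr rfl fun i _ => ?_
  rw [← prod_filter]
  refine prod_congr ?_ fun _ _ => rfl
  ext j
  simp

lemma vander_pairs {m : ℕ} {R : Type*} [CommRing R] (v : Fin m → R) :
    (Matrix.vandermonde v).det =
      ∏ p ∈ Finset.univ.filter (fun p : Fin m × Fin m => p.1 < p.2), (v p.2 - v p.1) := by
  rw [Matrix.det_vandermonde, prod_pairs (fun i j => v j - v i)]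

lemma DD_eq (m : ℕ) : DD m = (Matrix.vandermonde (X : Fin m → MvPolynomial (Fin m) ℚ)).det := by
  rw [vander_pairs, DD]

lemma rename_DD {m : ℕ} (π : Perm (Fin m)) :
    rename π (DD m) = (Perm.sign π : ℤ) • DD m := by
  have h1 : rename π (DD m) =
      (Matrix.vandermonde (fun i => (X (π i) : MvPolynomial (Fin m) ℚ))).det := by
    rw [vander_pairs, DD]
    simp
  have h2 : Matrix.vandermonde (fun i => (X (π i) : MvPolynomial (Fin m) ℚ)) =
      (Matrix.vandermonde (X : Fin m → MvPolynomial (Fin m) ℚ)).submatrix π id := by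
    ext i j
    simp [Matrix.vandermonde_apply]
  rw [h1, h2, Matrix.det_permute, ← DD_eq, zsmul_eq_mul]

lemma DD_sum (m : ℕ) : DD m = ∑ π : Perm (Fin m), (Perm.sign π : ℤ) •
    ∏ i : Fin m, (X (π i) : MvPolynomial (Fin m) ℚ) ^ (i : ℕ) := by
  rw [DD_eq, Matrix.det_apply]
  rfl

lemma DD_sum' (m : ℕ) : DD m = ∑ π : Perm (Fin m), (Perm.sign π : ℤ) •
    ∏ i : Fin m, (X i : MvPolynomial (Fin m) ℚ) ^ (π i : ℕ) := by
  rw [DD_eq, ← Matrix.det_transpose, Matrix.det_apply]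
  rfl

lemma sign_sq {m : ℕ} (π : Perm (Fin m)) : (Perm.sign π : ℤ) * (Perm.sign π : ℤ) = 1 := by
  rw [← Units.val_mul, Int.units_mul_self, Units.val_one]

lemma ell_sym (m α : ℕ) : ∃ K : ℚ, K ≠ 0 ∧ ∀ H : MvPolynomial (Fin m) ℚ,
    (∀ π : Perm (Fin m), rename π H = H) →
    ell m α (H * DD m ^ 2) = K * ell m α (H * DD m * ∏ i : Fin m, X i ^ (Fin.rev i : ℕ)) := by
  have hz : ∀ π : Perm (Fin m), ∀ p : MvPolynomial (Fin m) ℚ,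
      ell m α ((Perm.sign π : ℤ) • p) = (((Perm.sign π : ℤ)) : ℚ) * ell m α p := by
    intro π p
    rw [map_zsmul, zsmul_eq_mul]
  have hss : ∀ π : Perm (Fin m), (((Perm.sign π : ℤ)) : ℚ) * (((Perm.sign π : ℤ)) : ℚ) = 1 := by
    intro π
    exact_mod_cast sign_sq π
  have key : ∀ H : MvPolynomial (Fin m) ℚ, (∀ π : Perm (Fin m), rename π H = H) →
      ∀ (π : Perm (Fin m)) (e : Fin m → ℕ),
      ell m α (H * DD m * ∏ i : Fin m, X (π i) ^ e i) = (((Perm.sign π : ℤ)) : ℚ) *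
        ell m α (H * DD m * ∏ i : Fin m, X i ^ e i) := by
    intro H hH π e
    have hr : rename π (H * DD m * ∏ i : Fin m, X i ^ e i) =
        (Perm.sign π : ℤ) • (H * DD m * ∏ i : Fin m, X (π i) ^ e i) := by
      rw [map_mul, map_mul, hH, rename_DD, mul_smul_comm, smul_mul_assoc]
      simp
    rw [← ell_rename π (H * DD m * ∏ i : Fin m, X i ^ e i), hr, hz, ← mul_assoc, hss, one_mul]
  refine ⟨(m.factorial : ℚ) * (Perm.sign (Fin.revPerm : Perm (Fin m)) : ℤ), ?_, ?_⟩
  · refine mul_ne_zero (by exact_mod_cast m.factorial_ne_zero) fun h => ?_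
    have := hss (Fin.revPerm : Perm (Fin m))
    rw [h] at this
    simp at this
  · intro H hH
    have h1 : H * DD m ^ 2 = ∑ π : Perm (Fin m), (Perm.sign π : ℤ) •
        (H * DD m * ∏ i : Fin m, (X (π i) : MvPolynomial (Fin m) ℚ) ^ (i : ℕ)) := by
      rw [pow_two, ← mul_assoc]
      conv_lhs => rw [DD_sum]
      conv_rhs => rw [DD_sum]
      rw [mul_sum]
      refine sum_congr rfl fun π _ => ?_
      rw [mul_smul_comm]
    rw [h1, map_sum]
    have h2 : ∀ π : Perm (Fin m), ell m α ((Perm.sign π : ℤ) •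
        (H * DD m * ∏ i : Fin m, (X (π i) : MvPolynomial (Fin m) ℚ) ^ (i : ℕ))) =
        ell m α (H * DD m * ∏ i : Fin m, X i ^ (i : ℕ)) := by
      intro π
      rw [hz, key H hH π (fun i => (i : ℕ)), ← mul_assoc, hss, one_mul]
    rw [sum_congr rfl fun π _ => h2 π, sum_const, card_univ, Fintype.card_perm, Fintype.card_fin,
      nsmul_eq_mul, mul_assoc (m.factorial : ℚ), ← key H hH Fin.revPerm (fun i => (Fin.rev i : ℕ))]
    congr 1
    congr 2
    rw [← Equiv.prod_comp (Fin.revPerm : Perm (Fin m)) (fun i => (X i : MvPolynomial (Fin m) ℚ) ^ (i : ℕ))]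
    rfl

lemma prod_X_pow {m : ℕ} (e : Fin m → ℕ) :
    ∏ i, (X i : MvPolynomial (Fin m) ℚ) ^ e i = monomial (Finsupp.equivFunOnFinite.symm e) 1 := by
  rw [monomial_eq, Finsupp.prod_fintype _ _ (by simp)]
  simp

lemma ell_DD {m α : ℕ} (b : Fin m → ℕ) :
    ell m α ((∏ i, X i ^ b i) * DD m) = (∏ i, ((b i + α).factorial : ℚ)) *
      ∏ p ∈ Finset.univ.filter (fun p : Fin m × Fin m => p.1 < p.2), ((b p.2 : ℚ) - b p.1) := by
  have h1 : ell m α ((∏ i, X i ^ b i) * DD m) =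
      (Matrix.of fun i j : Fin m => (((b i + α).factorial : ℚ) *
        (((b i + α + 1).ascFactorial j : ℕ) : ℚ))).det := by
    rw [DD_sum', mul_sum, map_sum, ← Matrix.det_transpose, Matrix.det_apply]
    refine sum_congr rfl fun π _ => ?_
    rw [mul_smul_comm, map_zsmul, ← prod_mul_distrib]
    simp only [← pow_add]
    rw [prod_X_pow, ell_monomial, one_mul]
    congr 1
    refine prod_congr rfl fun i _ => ?_
    simp only [Matrix.transpose_apply, Matrix.of_apply, Finsupp.equivFunOnFinite_symm_apply_apply]
    rw [← Nat.cast_mul, Nat.factorial_mul_ascFactorial]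
    congr 2
    ring
  rw [h1, Matrix.det_mul_column (fun i => ((b i + α).factorial : ℚ))
    (fun i j : Fin m => (((b i + α + 1).ascFactorial j : ℕ) : ℚ))]
  congr 1
  have h2 := Matrix.det_eval_matrixOfPolynomials_eq_det_vandermonde
    (fun i : Fin m => (((b i + α + 1 : ℕ)) : ℚ)) (fun j => ascPochhammer ℚ j)
    (fun j => ascPochhammer_natDegree _ _) (fun j => monic_ascPochhammer _ _)
  rw [vander_pairs] at h2
  have h3 : ∀ p : Fin m × Fin m, ((b p.2 : ℚ) - b p.1) =
      (((b p.2 + α + 1 : ℕ)) : ℚ) - (((b p.1 + α + 1 : ℕ)) : ℚ) := by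
    intro p; push_cast; ring
  rw [prod_congr rfl fun p _ => h3 p, h2]
  congr 1
  ext i j
  simp only [Matrix.of_apply]
  rw [← ascPochhammer_nat_eq_ascFactorial, ascPochhammer_eval_cast]

lemma sum_count {m r : ℕ} (g : (Fin m → ℕ) → ℚ) :
    ∑ c : Fin r → Fin m, g (fun s => (univ.filter fun z => c z = s).card) =
      ∑ a ∈ Finset.Nat.antidiagonalTuple m r, (r.factorial / ∏ s, ((a s).factorial : ℚ)) * g a := by
  let L : MvPolynomial (Fin m) ℚ →ₗ[ℚ] ℚ :=
    (basisMonomials (Fin m) ℚ).constr ℚ (fun b => g (fun i => b i))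
  have hL : ∀ e : Fin m → ℕ, L (∏ i, X i ^ e i) = g e := by
    intro e
    have : monomial (Finsupp.equivFunOnFinite.symm e) (1 : ℚ) =
      basisMonomials (Fin m) ℚ (Finsupp.equivFunOnFinite.symm e) := by simp
    rw [prod_X_pow, this, Module.Basis.constr_basis]
    rfl
  have h1 := Fintype.sum_pow (fun i : Fin m => (X i : MvPolynomial (Fin m) ℚ)) r
  rw [Finset.sum_pow_eq_sum_piAntidiag] at h1
  have h2 := congrArg L h1
  rw [map_sum, map_sum] at h2
  have h3 : ∀ c : Fin r → Fin m, L (∏ z, X (c z)) =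
      g (fun s => (univ.filter fun z => c z = s).card) := by
    intro c
    rw [← hL, ← Finset.prod_fiberwise (s := univ) (g := c)]
    congr 1
    refine prod_congr rfl fun s _ => ?_
    rw [← prod_const]
    refine prod_congr rfl fun z hz => ?_
    rw [(mem_filter.1 hz).2]
  rw [sum_congr rfl fun c _ => h3 c] at h2
  rw [← h2]
  refine sum_congr ?_ fun a ha => ?_
  · ext a
    simp [Finset.Nat.mem_antidiagonalTuple]
  · rw [← nsmul_eq_mul, map_nsmul, hL, nsmul_eq_mul]
    congr 1
    have h4 := Nat.multinomial_spec (univ : Finset (Fin m)) a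
    rw [eq_div_iff (prod_ne_zero_iff.2 fun s _ => by exact_mod_cast (a s).factorial_ne_zero)]
    have h5 : ∑ s, a s = r := by
      exact Finset.Nat.mem_antidiagonalTuple.1 ha
    rw [h5] at h4
    rw [mul_comm]
    exact_mod_cast h4

lemma HH_sym (m lam r : ℕ) (π : Perm (Fin m)) : rename π (HH m lam r) = HH m lam r := by
  rw [HH, map_sum]
  refine Fintype.sum_equiv (Equiv.arrowCongr (Equiv.refl _) π) _ _ fun c => ?_
  simp only [map_mul, map_prod, rename_X, rename_C, Equiv.arrowCongr_apply, Equiv.coe_refl,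
    Function.comp_apply, Equiv.refl_symm, id]
  congr 1
  rw [← Equiv.prod_comp π (fun x => C ((lam.ascFactorial
    (univ.filter fun z => π (c z) = x).card : ℕ) : ℚ))]
  simp

/-- Coefficient of `x^r` in the evaluated series for `F(m,n,λ;x)`:
`f_r(m,n,λ)/r! = Σ_{a_0+⋯+a_{m-1}=r} ∏_{i<j} (a_i - a_j + j - i)/(j-i)
  · ∏_s λ^{(a_s)} (n-s)^{(a_s)} / a_s!`. -/
theorem fSum_div_factorial_eq (m n lam r : ℕ) (hm : 0 < m) (hn : 0 < n)
    (hlam : 0 < lam) (hmn : m ≤ n) :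
    (fSum r m n lam : ℚ) / r.factorial =
      ∑ a ∈ Finset.Nat.antidiagonalTuple m r,
        (∏ p ∈ Finset.univ.filter (fun p : Fin m × Fin m => p.1 < p.2),
            (((a p.1 : ℚ) - (a p.2 : ℚ) + ((p.2 : ℕ) : ℚ) - ((p.1 : ℕ) : ℚ)) /
              (((p.2 : ℕ) : ℚ) - ((p.1 : ℕ) : ℚ)))) *
        ∏ s : Fin m,
          ((Nat.ascFactorial lam (a s) : ℚ) *
            (Nat.ascFactorial (n - (s : ℕ)) (a s) : ℚ) / (a s).factorial) := by
  obtain ⟨α, rfl⟩ := Nat.exists_eq_add_of_le hmn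
  obtain ⟨K, hK, hsym⟩ := ell_sym m α
  set E : (Fin m → ℕ) → ℚ := fun a => ell m α ((∏ i, X i ^ (a i + (Fin.rev i : ℕ))) * DD m) with hE
  have hEa : ∀ a, E a = (∏ i, ((a i + (Fin.rev i : ℕ) + α).factorial : ℚ)) *
      ∏ p ∈ Finset.univ.filter (fun p : Fin m × Fin m => p.1 < p.2),
        (((a p.2 + (Fin.rev p.2 : ℕ) : ℕ) : ℚ) - ((a p.1 + (Fin.rev p.1 : ℕ) : ℕ) : ℚ)) := by
    intro a
    exact ell_DD (fun i => a i + (Fin.rev i : ℕ))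
  have hrev : ∀ i : Fin m, ((Fin.rev i : ℕ) : ℚ) = m - 1 - (i : ℕ) := by
    intro i
    rw [Fin.val_rev, Nat.cast_sub (by omega)]
    push_cast
    ring
  have hE0 : E 0 ≠ 0 := by
    rw [hEa]
    refine mul_ne_zero (prod_ne_zero_iff.2 fun i _ => by exact_mod_cast Nat.factorial_ne_zero _)
      (prod_ne_zero_iff.2 fun p hp => ?_)
    have hlt : p.1 < p.2 := by simpa using hp
    have : ((p.1 : ℕ) : ℚ) < ((p.2 : ℕ) : ℚ) := by exact_mod_cast hlt
    push_cast
    rw [hrev, hrev]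
    simp only [Pi.zero_apply]
    intro h
    push_cast at h
    linarith
  have hZ : ell m α (DD m ^ 2) = K * E 0 := by
    have := hsym 1 (fun π => map_one _)
    rw [one_mul, one_mul, mul_comm (DD m)] at this
    rw [this, hE]
    simp
  have hH : ell m α (HH m lam r * DD m ^ 2) = K * ∑ a ∈ Finset.Nat.antidiagonalTuple m r,
      (r.factorial / ∏ s, ((a s).factorial : ℚ)) * ((∏ s, (lam.ascFactorial (a s) : ℚ)) * E a) := by
    rw [hsym _ (HH_sym m lam r),
      ← sum_count (fun a => (∏ s, (lam.ascFactorial (a s) : ℚ)) * E a), HH, sum_mul, sum_mul, map_sum]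
    congr 1
    refine sum_congr rfl fun c _ => ?_
    rw [mul_assoc, mul_assoc, ← smul_eq_C_mul, map_smul, smul_eq_mul]
    congr 1
    rw [hE]
    simp only [pow_add]
    rw [prod_mul_distrib]
    have : ∏ z, (X (c z) : MvPolynomial (Fin m) ℚ) =
        ∏ s, X s ^ (univ.filter fun z => c z = s).card := by
      rw [← Finset.prod_fiberwise (s := univ) (g := c)]
      refine prod_congr rfl fun s _ => ?_
      rw [← prod_const]
      refine prod_congr rfl fun z hz => ?_
      rw [(mem_filter.1 hz).2]
    rw [this]
    congr 1
    ring
  have hmain := fSum_ell m α lam r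
  rw [hZ, hH, mul_assoc] at hmain
  have hmain2 := mul_left_cancel₀ hK hmain
  have hr : (r.factorial : ℚ) ≠ 0 := by exact_mod_cast r.factorial_ne_zero
  rw [div_eq_iff hr]
  refine mul_left_cancel₀ hE0 (hmain2.trans ?_)
  rw [sum_mul, mul_sum]
  refine sum_congr rfl fun a _ => ?_
  have hratio : E a = E 0 * ((∏ p ∈ Finset.univ.filter (fun p : Fin m × Fin m => p.1 < p.2),
            (((a p.1 : ℚ) - (a p.2 : ℚ) + ((p.2 : ℕ) : ℚ) - ((p.1 : ℕ) : ℚ)) /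
              (((p.2 : ℕ) : ℚ) - ((p.1 : ℕ) : ℚ)))) *
        ∏ s : Fin m, (Nat.ascFactorial (m + α - (s : ℕ)) (a s) : ℚ)) := by
    have e1 : (∏ i, ((a i + (Fin.rev i : ℕ) + α).factorial : ℚ)) =
        (∏ i, (((0 : Fin m → ℕ) i + (Fin.rev i : ℕ) + α).factorial : ℚ)) *
          ∏ s : Fin m, (Nat.ascFactorial (m + α - (s : ℕ)) (a s) : ℚ) := by
      rw [← prod_mul_distrib]
      refine prod_congr rfl fun s _ => ?_
      have hs : m + α - (s : ℕ) = ((0 : Fin m → ℕ) s + (Fin.rev s : ℕ) + α) + 1 := by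
        rw [Fin.val_rev, Pi.zero_apply]
        omega
      rw [hs, ← Nat.cast_mul, Nat.factorial_mul_ascFactorial]
      congr 2
      rw [Pi.zero_apply]
      ring
    have e2 : (∏ p ∈ Finset.univ.filter (fun p : Fin m × Fin m => p.1 < p.2),
        (((a p.2 + (Fin.rev p.2 : ℕ) : ℕ) : ℚ) - ((a p.1 + (Fin.rev p.1 : ℕ) : ℕ) : ℚ))) =
        (∏ p ∈ Finset.univ.filter (fun p : Fin m × Fin m => p.1 < p.2),
        ((((0 : Fin m → ℕ) p.2 + (Fin.rev p.2 : ℕ) : ℕ) : ℚ) -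
          (((0 : Fin m → ℕ) p.1 + (Fin.rev p.1 : ℕ) : ℕ) : ℚ))) *
        (∏ p ∈ Finset.univ.filter (fun p : Fin m × Fin m => p.1 < p.2),
            (((a p.1 : ℚ) - (a p.2 : ℚ) + ((p.2 : ℕ) : ℚ) - ((p.1 : ℕ) : ℚ)) /
              (((p.2 : ℕ) : ℚ) - ((p.1 : ℕ) : ℚ)))) := by
      rw [← prod_mul_distrib]
      refine prod_congr rfl fun p hp => ?_
      have hlt : p.1 < p.2 := by simpa using hp
      have h1 : ((p.1 : ℕ) : ℚ) < ((p.2 : ℕ) : ℚ) := by exact_mod_cast hlt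
      have h2 : ((p.2 : ℕ) : ℚ) - ((p.1 : ℕ) : ℚ) ≠ 0 := by
        intro h
        linarith
      simp only [Nat.cast_add, hrev, Pi.zero_apply, Nat.cast_zero]
      field_simp
      ring
    rw [hEa, hEa, e1, e2]
    ring
  have e3 : ∏ s : Fin m, ((Nat.ascFactorial lam (a s) : ℚ) *
      (Nat.ascFactorial (m + α - (s : ℕ)) (a s) : ℚ) / (a s).factorial) =
      (∏ s, (lam.ascFactorial (a s) : ℚ)) *
      (∏ s : Fin m, (Nat.ascFactorial (m + α - (s : ℕ)) (a s) : ℚ)) /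
        ∏ s, ((a s).factorial : ℚ) := by
    rw [prod_div_distrib, prod_mul_distrib]
  rw [hratio, e3]
  ring
end

section
/- Let m, n be positive integers with m ≤ n, let r ≥ 1, let ξ ∈ S_r be a permutation of {0,…,r−1}, and let r_1,…,r_N be the sizes of the orbits of ξ on {0,…,r−1} (fixed points counted as orbits of size 1, so r_1+⋯+r_N = r). Then Σ_{η ∈ S_r} m^{cyc(η)} n^{cyc(ξη)} = (1/Λ_{m,n}) · ∫_{[0,∞)^m} Δ(q)² ∏_{k=1}^{m} q_k^{n−m} e^{−q_k} · ∏_{i=1}^{N} ( Σ_{j=1}^{m} q_j^{r_i} ) dq. -/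
open Finset MeasureTheory

/-- The multiset of the sizes of the orbits of a permutation `ξ` (fixed points
counted as orbits of size 1): its cycle type together with a `1` for each fixed point. -/
def orbitSizes {r : ℕ} (ξ : Equiv.Perm (Fin r)) : Multiset ℕ :=
  ξ.cycleType + Multiset.replicate ((Finset.univ.filter fun x => ξ x = x).card) 1

/-- The Vandermonde determinant `Δ(q) = ∏_{i<j} (q_j - q_i)`. -/
def vandermonde {m : ℕ} (q : Fin m → ℝ) : ℝ :=
  ∏ p ∈ Finset.univ.filter (fun p : Fin m × Fin m => p.1 < p.2), (q p.2 - q p.1)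

/-- The positive orthant `[0,∞)^m`. -/
def orthant (m : ℕ) : Set (Fin m → ℝ) := {q | ∀ k, 0 ≤ q k}

/-- `Λ_{m,n} = ∫_{[0,∞)^m} Δ(q)² ∏_k q_k^{n-m} e^{-q_k} dq`. -/
noncomputable def Lam (m n : ℕ) : ℝ :=
  ∫ q in orthant m, (vandermonde q) ^ 2 *
    ∏ k : Fin m, (q k ^ (n - m) * Real.exp (-(q k)))


section LadderProof

open Equiv

/-- Colourings constant on the cycles of `ξ`. -/
def invCol {α : Type*} [Fintype α] [DecidableEq α] (κ : Type*) [Fintype κ] [DecidableEq κ]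
    (ξ : Perm α) : Finset (α → κ) :=
  Finset.univ.filter fun f => ∀ a, f (ξ a) = f a

theorem mem_invCol {α : Type*} [Fintype α] [DecidableEq α] {κ : Type*} [Fintype κ] [DecidableEq κ]
    {ξ : Perm α} {f : α → κ} : f ∈ invCol κ ξ ↔ ∀ a, f (ξ a) = f a := by
  simp [invCol]

/-- Weighted count of invariant colourings. -/
def colSum {α : Type*} [Fintype α] [DecidableEq α] {κ : Type*} [Fintype κ] [DecidableEq κ]
    {R : Type*} [CommRing R] (w : κ → R) (ξ : Perm α) : R :=
  ∑ f ∈ invCol κ ξ, ∏ a, w (f a)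

/-- Weighted count of invariant colourings of `Option α`, with `none` having weight one. -/
def colSumD {α : Type*} [Fintype α] [DecidableEq α] {κ : Type*} [Fintype κ] [DecidableEq κ]
    {R : Type*} [CommRing R] (w : κ → R) (ξ : Perm (Option α)) : R :=
  ∑ f ∈ invCol κ ξ, ∏ a : α, w (f (some a))

theorem colSumD_eq {α : Type*} [Fintype α] [DecidableEq α] {κ : Type*} [Fintype κ] [DecidableEq κ]
    {R : Type*} [CommRing R] (w : κ → R) (τ : Perm (Option α)) :
    colSumD w τ = (if τ none = none then (Fintype.card κ : R) else 1) *
      colSum w (removeNone τ) := by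
  unfold colSumD colSum
  split_ifs with h
  · have hs : ∀ a, τ (some a) = some (removeNone τ a) := by
      intro a
      refine (removeNone_some τ ?_).symm
      rcases h' : τ (some a) with _ | b
      · exact absurd (τ.injective (h'.trans h.symm)) (by simp)
      · exact ⟨b, rfl⟩
    rw [Finset.mul_sum]
    have : ∀ f : α → κ, (Fintype.card κ : R) * ∏ a, w (f a) = ∑ _j : κ, ∏ a, w (f a) := by
      intro f; simp
    simp_rw [this]
    rw [← Finset.sum_product']
    refine Finset.sum_bij' (fun f _ => (fun a => f (some a), f none))
      (fun p _ => fun o => o.elim p.2 p.1) ?_ ?_ ?_ ?_ ?_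
    · intro f hf
      rw [mem_invCol] at hf
      simp only [Finset.mem_product, mem_invCol, Finset.mem_univ, and_true]
      intro a
      rw [← hs, hf]
    · rintro ⟨g, j⟩ hg
      simp only [Finset.mem_product, mem_invCol, Finset.mem_univ, and_true] at hg
      rw [mem_invCol]
      rintro (_ | a)
      · simp [h]
      · simp [hs, hg]
    · intro f _
      funext o
      cases o <;> rfl
    · intro p _; rfl
    · intro f _; rfl
  · rw [one_mul]
    have hb : ∃ b, τ none = some b := Option.ne_none_iff_exists'.mp h
    obtain ⟨b, hb⟩ := hb
    refine Finset.sum_bij' (fun f _ => fun a => f (some a))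
      (fun p _ => fun o => o.elim (p b) p) ?_ ?_ ?_ ?_ ?_
    · intro f hf
      rw [mem_invCol] at hf ⊢
      intro a
      rcases h' : τ (some a) with _ | c
      · rw [removeNone_none τ h', hf, ← hf (some a), h']
      · rw [removeNone_some τ ⟨c, h'⟩, hf]
    · intro g hg
      rw [mem_invCol] at hg ⊢
      rintro (_ | a)
      · simp [hb]
      · rcases h' : τ (some a) with _ | c
        · have := removeNone_none τ h'
          rw [hb] at this
          have := hg a
          simp_all
        · have := removeNone_some τ ⟨c, h'⟩
          rw [h'] at this
          have := hg a
          simp_all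
    · intro f hf
      rw [mem_invCol] at hf
      funext o
      cases o
      · simp [← hf none, hb]
      · rfl
    · intro p _; rfl
    · intro f _; rfl

theorem colSum_one_eq {α : Type*} [Fintype α] [DecidableEq α] (κ : Type*) [Fintype κ]
    [DecidableEq κ] {R : Type*} [CommRing R] (τ : Perm (Option α)) :
    colSum (fun _ : κ => (1 : R)) τ = (if τ none = none then (Fintype.card κ : R) else 1) *
      colSum (fun _ : κ => (1 : R)) (removeNone τ) := by
  rw [← colSumD_eq]
  simp [colSum, colSumD]

theorem removeNone_mul_optionCongr {α : Type*} [DecidableEq α] (τ : Perm (Option α))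
    (η : Perm α) : removeNone (τ * η.optionCongr) = removeNone τ * η := by
  apply Equiv.optionCongr_injective
  have : ∀ (a b : Perm α), (a * b).optionCongr = a.optionCongr * b.optionCongr := by
    intro a b
    exact Equiv.optionCongr_trans b a
  rw [this, map_equiv_removeNone, map_equiv_removeNone]
  simp [mul_assoc]

theorem removeNone_swap {α : Type*} [DecidableEq α] (y : Option α) :
    removeNone (swap none y) = (1 : Perm α) := by
  apply Equiv.optionCongr_injective
  simp

/-- The ladder sum with colour types. -/
noncomputable def ladG (m n : ℕ) {α : Type*} [Fintype α] [DecidableEq α] (ξ : Perm α) : ℝ :=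
  ∑ η : Perm α, colSum (fun _ : Fin m => (1 : ℝ)) η * colSum (fun _ : Fin n => (1 : ℝ)) (ξ * η)

theorem ladG_rec (m n : ℕ) {α : Type*} [Fintype α] [DecidableEq α] (ξ : Perm (Option α)) :
    ladG m n ξ = ∑ y : Option α, (if y = none then (m : ℝ) else 1) *
      (if ξ y = none then (n : ℝ) else 1) * ladG m n (removeNone (ξ * swap none y)) := by
  unfold ladG
  rw [← (Equiv.Perm.decomposeOption (α := α)).symm.sum_comp, Fintype.sum_prod_type]
  refine Finset.sum_congr rfl fun y _ => ?_
  rw [Finset.mul_sum]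
  refine Finset.sum_congr rfl fun η _ => ?_
  simp only [Equiv.Perm.decomposeOption_symm_apply]
  rw [← mul_assoc ξ, colSum_one_eq, colSum_one_eq (Fin n), removeNone_mul_optionCongr,
    removeNone_mul_optionCongr, removeNone_swap, one_mul]
  have h1 : (swap none y * η.optionCongr) none = y := by simp
  have h2 : (ξ * swap none y * η.optionCongr) none = ξ y := by simp
  rw [h1, h2, Fintype.card_fin, Fintype.card_fin]
  ring

section Kernel

variable {α : Type*} [Fintype α] [DecidableEq α] {κ : Type*} [Fintype κ] [DecidableEq κ]
    {R : Type*} [CommRing R] (w : κ → R) (ξ : Perm (Option α))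

/-- Colourings with prescribed colour at `none`. -/
def colH (j : κ) : R :=
  ∑ f ∈ (invCol κ ξ).filter (fun f => f none = j), ∏ a : α, w (f (some a))

/-- The set of colourings entering `colT`. -/
def colS (j l : κ) (y : Option α) : Finset (Option α → κ) :=
  (invCol κ (ξ * swap none y)).filter (fun f => f none = j ∧ (y = none ∨ f y = l))

/-- Split colourings. -/
def colT (j l : κ) (y : Option α) : R :=
  ∑ f ∈ colS ξ j l y, ∏ a : α, w (f (some a))

/-- Divided difference of `w j * colH j`. -/
def colK (j l : κ) : R := ∑ y, colT w ξ j l y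

variable {ξ}

theorem mem_colS {j l : κ} {y : Option α} {f : Option α → κ} :
    f ∈ colS ξ j l y ↔ (f none = j ∧ (y = none ∨ f y = l) ∧ f (ξ y) = j ∧
      (f (ξ none) = if y = none then j else l) ∧
      ∀ z, z ≠ none → z ≠ y → f (ξ z) = f z) := by
  simp only [colS, Finset.mem_filter, mem_invCol, Perm.mul_apply]
  constructor
  · rintro ⟨h, rfl, hy⟩
    refine ⟨rfl, hy, ?_, ?_, ?_⟩
    · simpa using h none
    · have := h y
      rw [swap_apply_right] at this
      rw [this]
      split_ifs with hh
      · rw [hh]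
      · exact hy.resolve_left hh
    · intro z h1 h2
      have := h z
      rwa [swap_apply_of_ne_of_ne h1 h2] at this
  · rintro ⟨h1, h2, h3, h4, h5⟩
    refine ⟨?_, h1, h2⟩
    intro z
    by_cases hz : z = none
    · subst hz; rw [swap_apply_left, h3, h1]
    by_cases hzy : z = y
    · subst hzy
      rw [swap_apply_right, h4, if_neg hz]
      exact (h2.resolve_left hz).symm
    · rw [swap_apply_of_ne_of_ne hz hzy, h5 z hz hzy]

variable (ξ)

theorem colT_none (j l : κ) : colT w ξ j l none = colH w ξ j := by
  unfold colT colH colS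
  have : ξ * swap none none = ξ := by rw [swap_self]; rfl
  rw [this]
  simp

theorem colT_step {j l : κ} (hjl : j ≠ l) {y : Option α} (hy : ξ y ≠ none) :
    w l * colT w ξ j l y = w j * colT w ξ j l (ξ y) := by
  unfold colT
  rw [Finset.mul_sum, Finset.mul_sum]
  refine Finset.sum_bij' (fun f _ => fun o => Function.update f none l (ξ.symm o))
    (fun f _ => Function.update (fun o => f (ξ o)) none j) ?_ ?_ ?_ ?_ ?_
  · intro f hf
    rw [mem_colS] at hf ⊢
    obtain ⟨h1, h2, h3, h4, h5⟩ := hf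
    have hs : ξ.symm none ≠ y := by
      intro h; exact hy (by rw [← h]; simp)
    have hs0 : ξ.symm none ≠ none := by
      intro h
      have h' : ξ none = none := by
        simpa using (congrArg ξ h).symm
      by_cases hyn : y = none
      · exact hy (by rw [hyn, h'])
      · rw [h', if_neg hyn, h1] at h4
        exact hjl h4
    refine ⟨?_, Or.inr ?_, ?_, ?_, ?_⟩
    · rw [Function.update_of_ne hs0, ← h5 _ hs0 hs]
      simpa using h1
    · simp only [Equiv.symm_apply_apply]
      rcases h2 with h2 | h2
      · simp [h2]
      · by_cases hyn : y = none
        · simp [hyn]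
        · rw [Function.update_of_ne hyn, h2]
    · simp only [Equiv.symm_apply_apply]
      rw [Function.update_of_ne hy, h3]
    · simp [hy]
    · intro z hz hzy
      simp only [Equiv.symm_apply_apply]
      rw [Function.update_of_ne hz]
      have hw : ξ.symm z ≠ y := by
        intro h; exact hzy (by rw [← h]; simp)
      by_cases hwn : ξ.symm z = none
      · rw [hwn, Function.update_self]
        have : z = ξ none := by rw [← hwn]; simp
        rw [this, h4, if_neg]
        rintro rfl
        exact hw hwn
      · rw [Function.update_of_ne hwn, ← h5 _ hwn hw]
        simp
  · intro f hf
    rw [mem_colS] at hf ⊢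
    obtain ⟨h1, h2, h3, h4, h5⟩ := hf
    have h2 := h2.resolve_left hy
    rw [if_neg hy] at h4
    have e1 : ∀ z, z ≠ none → Function.update (fun o => f (ξ o)) none j z = f (ξ z) :=
      fun z hz => Function.update_of_ne hz _ _
    have e2 : Function.update (fun o => f (ξ o)) none j none = j := Function.update_self _ _ _
    refine ⟨e2, ?_, ?_, ?_, ?_⟩
    · by_cases hyn : y = none
      · exact Or.inl hyn
      · right; rw [e1 _ hyn, h2]
    · rw [e1 _ hy, h3]
    · by_cases hn : ξ none = none
      · rw [hn] at h4
        exact absurd (h1.symm.trans h4) hjl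
      · rw [e1 _ hn]
        split_ifs with hyn
        · rw [← hyn, h3]
        · rw [h5 _ hn (fun h => hyn (ξ.injective h).symm), h4]
    · intro z hz hzy
      rw [e1 _ hz]
      by_cases hn : ξ z = none
      · rw [hn, e2, h1]
      · rw [e1 _ hn, h5 _ hn (fun h => hzy (ξ.injective h))]
  · intro f hf
    rw [mem_colS] at hf
    funext o
    by_cases ho : o = none
    · subst ho; simp [hf.1]
    · simp [Function.update_of_ne ho]
  · intro f hf
    rw [mem_colS] at hf
    obtain ⟨h1, h2, h3, h4, h5⟩ := hf
    rw [if_neg hy] at h4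
    funext o
    by_cases ho : ξ.symm o = none
    · rw [ho, Function.update_self]
      have : o = ξ none := by rw [← ho]; simp
      rw [this, h4]
    · rw [Function.update_of_ne ho, Function.update_of_ne ho]
      simp
  · intro f hf
    have hf0 : f none = j := (mem_colS.mp hf).1
    have key : w l * ∏ a : α, w (f (some a)) = ∏ o, w (Function.update f none l o) := by
      rw [Fintype.prod_option]; simp
    rw [key, ← Equiv.prod_comp ξ.symm, Fintype.prod_option]
    congr 1
    have hs : ξ.symm none ≠ y := by
      intro h; exact hy (by rw [← h]; simp)
    obtain ⟨h1, h2, h3, h4, h5⟩ := mem_colS.mp hf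
    have hs0 : ξ.symm none ≠ none := by
      intro h
      have h' : ξ none = none := by
        simpa using (congrArg ξ h).symm
      by_cases hyn : y = none
      · exact hy (by rw [hyn, h'])
      · rw [h', if_neg hyn, h1] at h4
        exact hjl h4
    rw [Function.update_of_ne hs0, ← h5 _ hs0 hs]
    simp [h1]

theorem colT_last {j l : κ} {y : Option α} (hy : ξ y = none) :
    colT w ξ j l y = colH w ξ l := by
  unfold colT colH
  refine Finset.sum_bij' (fun f _ => Function.update f none l)
    (fun f _ => Function.update f none j) ?_ ?_ ?_ ?_ ?_
  · intro f hf
    rw [mem_colS] at hf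
    obtain ⟨h1, h2, h3, h4, h5⟩ := hf
    simp only [Finset.mem_filter, mem_invCol, Function.update_self, and_true]
    intro z
    by_cases hzy : z = y
    · rw [hzy, hy, Function.update_self]
      rcases h2 with h2 | h2
      · rw [h2, Function.update_self]
      · by_cases hn : y = none
        · rw [hn, Function.update_self]
        · rw [Function.update_of_ne hn, h2]
    · have hz : ξ z ≠ none := fun h => hzy (ξ.injective (h.trans hy.symm))
      rw [Function.update_of_ne hz]
      by_cases hzn : z = none
      · rw [hzn, Function.update_self, h4, if_neg]
        exact fun h => hzy (hzn.trans h.symm)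
      · rw [Function.update_of_ne hzn, h5 z hzn hzy]
  · intro f hf
    simp only [Finset.mem_filter, mem_invCol] at hf
    obtain ⟨h1, h2⟩ := hf
    have e1 : ∀ z, z ≠ none → Function.update f none j z = f z :=
      fun z hz => Function.update_of_ne hz _ _
    have e2 : Function.update f none j none = j := Function.update_self _ _ _
    rw [mem_colS]
    refine ⟨e2, ?_, ?_, ?_, ?_⟩
    · by_cases hyn : y = none
      · exact Or.inl hyn
      · right; rw [e1 _ hyn, ← h1, hy, h2]
    · rw [hy, e2]
    · split_ifs with hyn
      · rw [← hyn, hy, hyn, e2]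
      · have : ξ none ≠ none := fun h => hyn (ξ.injective (hy.trans h.symm))
        rw [e1 _ this, h1, h2]
    · intro z hz hzy
      have : ξ z ≠ none := fun h => hzy (ξ.injective (h.trans hy.symm))
      rw [e1 _ this, e1 _ hz, h1]
  · intro f hf
    have hf0 : f none = j := (mem_colS.mp hf).1
    subst hf0
    simp
  · intro f hf
    have hf0 : f none = l := (Finset.mem_filter.mp hf).2
    subst hf0
    simp
  · intro f hf
    simp

theorem colK_spec {j l : κ} (hjl : j ≠ l) :
    w j * colH w ξ j - w l * colH w ξ l = (w j - w l) * colK w ξ j l := by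
  have h1 : w l * colK w ξ j l = ∑ y, if ξ y = none then w l * colH w ξ l
      else w j * colT w ξ j l (ξ y) := by
    unfold colK
    rw [Finset.mul_sum]
    refine Finset.sum_congr rfl fun y _ => ?_
    split_ifs with h
    · rw [colT_last w ξ h]
    · exact colT_step w ξ hjl h
  have h2 : w j * colK w ξ j l = w j * colH w ξ j + ∑ a : α, w j * colT w ξ j l (some a) := by
    unfold colK
    rw [Fintype.sum_option, mul_add, colT_none, Finset.mul_sum]
  rw [Equiv.sum_comp ξ (fun y => if y = none then w l * colH w ξ l
      else w j * colT w ξ j l y), Fintype.sum_option] at h1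
  simp only [if_true, reduceCtorEq, if_false] at h1
  rw [sub_mul, h1, h2]
  ring

/-- Sum of the kernels over ordered pairs of distinct colours. -/
theorem sum_colK :
    (∑ y, ∑ f ∈ (invCol κ ξ).filter (fun f => f y = f none), ∏ a : α, w (f (some a))) +
      ∑ j, ∑ l ∈ Finset.univ.filter (fun l => j ≠ l), colK w ξ j l =
    ∑ y, (if y = none then (Fintype.card κ : R) else 1) * colSumD w (ξ * swap none y) := by
  have h : ∑ j, ∑ l ∈ Finset.univ.filter (fun l => j ≠ l), colK w ξ j l =
      ∑ y, ∑ j, ∑ l ∈ Finset.univ.filter (fun l => j ≠ l), colT w ξ j l y := by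
    unfold colK
    rw [Finset.sum_comm]
    refine Finset.sum_congr rfl fun j _ => ?_
    rw [Finset.sum_comm]
  rw [h, ← Finset.sum_add_distrib]
  refine Finset.sum_congr rfl fun y _ => ?_
  by_cases hy : y = none
  · subst hy
    have h0 : ξ * swap none none = ξ := by rw [swap_self]; rfl
    rw [h0, if_pos rfl]
    simp only [colT_none, Finset.filter_true]
    have hD : ∑ f ∈ invCol κ ξ, ∏ a : α, w (f (some a)) = ∑ j, colH w ξ j := by
      unfold colH
      exact (Finset.sum_fiberwise _ _ _).symm
    unfold colSumD
    rw [hD, ← Finset.sum_add_distrib, Finset.mul_sum]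
    refine Finset.sum_congr rfl fun j _ => ?_
    have hs : Finset.univ.filter (fun l => j ≠ l) = Finset.univ.erase j := by
      ext l; simp [eq_comm]
    rw [hs, Finset.add_sum_erase Finset.univ (fun _ => colH w ξ j) (Finset.mem_univ j)]
    simp
  · rw [if_neg hy, one_mul]
    unfold colSumD
    rw [← Finset.sum_filter_add_sum_filter_not (invCol κ (ξ * swap none y))
      (fun f => f y = f none)]
    congr 1
    · refine Finset.sum_congr ?_ fun _ _ => rfl
      ext f
      simp only [Finset.mem_filter, mem_invCol, Perm.mul_apply]
      refine and_congr_left fun hf => ?_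
      have hsw : ∀ z, f (swap none y z) = f z := by
        intro z
        by_cases hz : z = none
        · rw [hz, swap_apply_left, hf]
        by_cases hzy : z = y
        · rw [hzy, swap_apply_right, hf]
        rw [swap_apply_of_ne_of_ne hz hzy]
      constructor
      · intro h z
        rw [h, hsw]
      · intro h z
        have := h (swap none y z)
        rwa [swap_apply_self, hsw] at this
    · unfold colT colS
      simp only [Finset.sum_filter]
      simp_rw [Finset.ite_sum_zero]
      rw [Finset.sum_congr rfl fun j _ => Finset.sum_comm, Finset.sum_comm]
      refine Finset.sum_congr rfl fun f _ => ?_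
      rw [Finset.sum_eq_single (f none), Finset.sum_eq_single (f y)]
      · simp [eq_comm]
      · intro l _ hl
        simp [hy, hl.symm]
      · simp
      · intro j _ hj
        simp [hj.symm]
      · simp

theorem sum_colH : ∑ j, colH w ξ j = colSumD w ξ := by
  unfold colH colSumD
  exact Finset.sum_fiberwise _ _ _

end Kernel

section Poly

open MvPolynomial

/-- The integral against `e^{-Σ q}` on the orthant, as an algebraic functional. -/
noncomputable def lagL (m : ℕ) : MvPolynomial (Fin m) ℝ →ₗ[ℝ] ℝ :=
  (MvPolynomial.basisMonomials (Fin m) ℝ).constr ℝ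
    (fun a => ∏ k, ((a k).factorial : ℝ))

theorem lagL_monomial {m : ℕ} (a : Fin m →₀ ℕ) (c : ℝ) :
    lagL m (monomial a c) = c * ∏ k, ((a k).factorial : ℝ) := by
  have h : monomial a c = c • (MvPolynomial.basisMonomials (Fin m) ℝ a) := by
    simp [MvPolynomial.smul_monomial]
  rw [h, map_smul, lagL, Module.Basis.constr_basis, smul_eq_mul]

theorem lagL_ibp {m : ℕ} (j : Fin m) (p : MvPolynomial (Fin m) ℝ) :
    lagL m (pderiv j (X j * p)) = lagL m (X j * p) := by
  induction p using MvPolynomial.induction_on' with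
  | monomial a c =>
    have h : X j * monomial a c = monomial (Finsupp.single j 1 + a) c := by
      rw [X, monomial_mul, one_mul]
    rw [h, pderiv_monomial, lagL_monomial, lagL_monomial]
    have h2 : Finsupp.single j 1 + a - Finsupp.single j 1 = a := by simp
    rw [h2, ← Finset.mul_prod_erase Finset.univ (fun k => ((a k).factorial : ℝ)) (Finset.mem_univ j),
      ← Finset.mul_prod_erase Finset.univ (fun k => (((Finsupp.single j 1 + a : Fin m →₀ ℕ) k).factorial : ℝ))
      (Finset.mem_univ j)]
    have h3 : ∏ k ∈ Finset.univ.erase j, (((Finsupp.single j 1 + a : Fin m →₀ ℕ) k).factorial : ℝ) =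
        ∏ k ∈ Finset.univ.erase j, ((a k).factorial : ℝ) := by
      refine Finset.prod_congr rfl fun k hk => ?_
      rw [Finsupp.add_apply, Finsupp.single_eq_of_ne (Finset.ne_of_mem_erase hk), zero_add]
    rw [h3]
    simp only [Finsupp.add_apply, Finsupp.single_eq_same]
    rw [add_comm 1, Nat.factorial_succ]
    push_cast
    ring
  | add p q hp hq => rw [mul_add, map_add, map_add, map_add, hp, hq]

theorem derivation_prod_log {ι A : Type*} [CommRing A] [Algebra ℝ A] (D : Derivation ℝ A A)
    (s : Finset ι) (g k : ι → A) (h : ∀ i ∈ s, D (g i) = g i * k i) :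
    D (∏ i ∈ s, g i) = (∏ i ∈ s, g i) * ∑ i ∈ s, k i := by
  classical
  induction s using Finset.induction_on with
  | empty => simp
  | insert i s hi ih =>
    rw [Finset.prod_insert hi, Finset.sum_insert hi, Derivation.leibniz,
      ih fun j hj => h j (Finset.mem_insert_of_mem hj), h i (Finset.mem_insert_self _ _)]
    simp only [smul_eq_mul]
    ring

variable {m : ℕ} {α : Type*} [Fintype α] [DecidableEq α] (ξ : Perm (Option α))

local notation "XX" => (X : Fin m → MvPolynomial (Fin m) ℝ)

set_option linter.unusedSectionVars false in
theorem pderiv_colouring (f : Option α → Fin m) :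
    pderiv (f none) (∏ o, XX (f o)) =
      ∑ y, if f y = f none then ∏ a : α, XX (f (some a)) else 0 := by
  have h1 := derivation_prod_log ((XX (f none)) • (pderiv (R := ℝ) (f none))) Finset.univ
    (fun o => XX (f o)) (fun o => if f o = f none then 1 else 0) (by
      intro o _
      rw [Derivation.smul_apply, pderiv_X]
      by_cases h : f o = f none
      · simp [h]
      · simp [h])
  rw [Derivation.smul_apply, smul_eq_mul] at h1
  apply mul_left_cancel₀ (X_ne_zero (R := ℝ) (f none))
  rw [h1, Fintype.prod_option, mul_assoc, Finset.mul_sum]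
  congr 1
  refine Finset.sum_congr rfl fun o _ => ?_
  split_ifs <;> simp

theorem sum_pderiv_colH :
    ∑ j, pderiv j (XX j * colH XX ξ j) =
      ∑ y, ∑ f ∈ (invCol (Fin m) ξ).filter (fun f => f y = f none),
        ∏ a : α, XX (f (some a)) := by
  have h1 : ∀ j, pderiv j (XX j * colH XX ξ j) =
      ∑ f ∈ (invCol (Fin m) ξ).filter (fun f => f none = j),
        ∑ y, if f y = f none then ∏ a : α, XX (f (some a)) else 0 := by
    intro j
    unfold colH
    rw [Finset.mul_sum, map_sum]
    refine Finset.sum_congr rfl fun f hf => ?_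
    obtain rfl := (Finset.mem_filter.mp hf).2
    rw [← pderiv_colouring, Fintype.prod_option]
  simp_rw [h1]
  rw [Finset.sum_fiberwise, Finset.sum_comm]
  refine Finset.sum_congr rfl fun y _ => ?_
  rw [Finset.sum_filter]

theorem sum_X_colH : ∑ j, XX j * colH XX ξ j = colSum XX ξ := by
  unfold colH colSum
  rw [← Finset.sum_fiberwise (invCol (Fin m) ξ) (fun f => f none)]
  refine Finset.sum_congr rfl fun j _ => ?_
  rw [Finset.mul_sum]
  refine Finset.sum_congr rfl fun f hf => ?_
  obtain rfl := (Finset.mem_filter.mp hf).2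
  rw [Fintype.prod_option]

theorem colK_symm (j l : Fin m) : colK XX ξ j l = colK XX ξ l j := by
  by_cases h : j = l
  · rw [h]
  have h1 := colK_spec XX ξ h
  have h2 := colK_spec XX ξ (Ne.symm h)
  have h3 : XX j - XX l ≠ 0 := sub_ne_zero.mpr (fun e => h (X_injective e))
  apply mul_left_cancel₀ h3
  linear_combination -h1 - h2

/-- Vandermonde polynomial. -/
noncomputable def vdmP (m : ℕ) : MvPolynomial (Fin m) ℝ :=
  ∏ p ∈ Finset.univ.filter (fun p : Fin m × Fin m => p.1 < p.2), (X p.2 - X p.1)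

/-- Weight polynomial. -/
noncomputable def wtP (m e : ℕ) : MvPolynomial (Fin m) ℝ := vdmP m ^ 2 * ∏ k, X k ^ e

theorem sum_pairs_symm (K : Fin m → Fin m → MvPolynomial (Fin m) ℝ)
    (hK : ∀ j l, K j l = K l j) :
    ∑ j, ∑ l ∈ Finset.univ.filter (fun l => j ≠ l), K j l =
      2 * ∑ p ∈ Finset.univ.filter (fun p : Fin m × Fin m => p.1 < p.2), K p.2 p.1 := by
  have h1 : ∀ j l : Fin m, (if j ≠ l then K j l else 0) =
      (if j < l then K l j else 0) + (if l < j then K j l else 0) := by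
    intro j l
    rcases lt_trichotomy j l with h | h | h
    · simp [h, h.ne, h.le, hK j l]
    · simp [h]
    · simp [h, h.ne', h.le]
  simp_rw [Finset.sum_filter, h1, Fintype.sum_prod_type, Finset.sum_add_distrib]
  rw [Finset.sum_comm (f := fun j l => if l < j then K j l else 0), two_mul]

/-- The Schwinger–Dyson derivation. -/
noncomputable def sdD : Derivation ℝ (MvPolynomial (Fin m) ℝ) (MvPolynomial (Fin m) ℝ) :=
  ∑ j, (XX j * colH XX ξ j) • pderiv j

theorem sdD_apply (p : MvPolynomial (Fin m) ℝ) :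
    sdD ξ p = ∑ j, (XX j * colH XX ξ j) * pderiv j p := by
  unfold sdD
  have h := congrFun (map_sum (Derivation.coeFnAddMonoidHom (R := ℝ)
    (A := MvPolynomial (Fin m) ℝ) (M := MvPolynomial (Fin m) ℝ))
    (fun j => (XX j * colH XX ξ j) • pderiv j) Finset.univ) p
  rw [Finset.sum_apply] at h
  exact h

theorem sdD_X (k : Fin m) : sdD ξ (X k) = XX k * colH XX ξ k := by
  rw [sdD_apply, Finset.sum_eq_single k]
  · simp
  · intro j _ hj
    rw [pderiv_X_of_ne hj.symm, mul_zero]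
  · simp

theorem sdD_wtP (e : ℕ) : sdD ξ (wtP m e) = wtP m e *
    ((e : MvPolynomial (Fin m) ℝ) * colSumD XX ξ +
      ∑ j, ∑ l ∈ Finset.univ.filter (fun l => j ≠ l), colK XX ξ j l) := by
  have h1 : sdD ξ (vdmP m) = vdmP m *
      ∑ p ∈ Finset.univ.filter (fun p : Fin m × Fin m => p.1 < p.2), colK XX ξ p.2 p.1 := by
    refine derivation_prod_log _ _ _ _ fun p hp => ?_
    have hp := (Finset.mem_filter.mp hp).2
    rw [map_sub, sdD_X, sdD_X, colK_spec XX ξ hp.ne']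
  have h2 : sdD ξ (∏ k, XX k ^ e) = (∏ k, XX k ^ e) * ∑ k, (e : MvPolynomial (Fin m) ℝ) *
      colH XX ξ k := by
    refine derivation_prod_log _ _ _ _ fun k _ => ?_
    rw [Derivation.leibniz_pow, sdD_X]
    rcases e with _ | e
    · simp
    · simp only [smul_eq_mul, nsmul_eq_mul, Nat.add_sub_cancel]
      ring
  rw [sum_pairs_symm _ (colK_symm ξ), ← sum_colH, Finset.mul_sum]
  unfold wtP
  rw [Derivation.leibniz, Derivation.leibniz_pow, h1, h2]
  simp only [smul_eq_mul, nsmul_eq_mul, Nat.add_one_sub_one, pow_one]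
  push_cast
  ring

theorem lagL_rec (n : ℕ) (hmn : m ≤ n) :
    lagL m (colSum XX ξ * wtP m (n - m)) =
      ∑ y : Option α, (if y = none then (m : ℝ) else 1) *
      (if ξ y = none then (n : ℝ) else 1) *
        lagL m (colSum XX (removeNone (ξ * swap none y)) * wtP m (n - m)) := by
  set W := wtP m (n - m) with hW
  have h1 : ∑ j, pderiv j (XX j * (colH XX ξ j * W)) =
      (∑ y, ∑ f ∈ (invCol (Fin m) ξ).filter (fun f => f y = f none),
        ∏ a : α, XX (f (some a))) * W + sdD ξ W := by
    rw [← sum_pderiv_colH, sdD_apply, Finset.sum_mul, ← Finset.sum_add_distrib]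
    refine Finset.sum_congr rfl fun j _ => ?_
    rw [← mul_assoc, pderiv_mul]
  have h2 : lagL m (colSum XX ξ * W) = lagL m (∑ j, pderiv j (XX j * (colH XX ξ j * W))) := by
    rw [map_sum]
    simp_rw [lagL_ibp]
    rw [← map_sum, ← sum_X_colH, Finset.sum_mul]
    simp_rw [mul_assoc]
  rw [h2, h1, sdD_wtP]
  have h3 := sum_colK XX ξ
  have h4 : (∑ y, ∑ f ∈ (invCol (Fin m) ξ).filter (fun f => f y = f none),
        ∏ a : α, XX (f (some a))) * W + W * (((n - m : ℕ) : MvPolynomial (Fin m) ℝ) * colSumD XX ξ +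
      ∑ j, ∑ l ∈ Finset.univ.filter (fun l => j ≠ l), colK XX ξ j l) =
      ∑ y : Option α, ((if y = none then (m : ℝ) else 1) *
      (if ξ y = none then (n : ℝ) else 1)) •
        (colSum XX (removeNone (ξ * swap none y)) * W) := by
    have h5 : colSumD XX ξ = ∑ y : Option α, if ξ y = none then
        (if y = none then (m : MvPolynomial (Fin m) ℝ) else 1) *
          colSum XX (removeNone (ξ * swap none y)) else 0 := by
      have h8 : ξ (ξ.symm none) = none := by simp
      have h9 : removeNone (ξ * swap none (ξ.symm none)) = removeNone ξ := by
        apply Equiv.optionCongr_injective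
        have ha : (ξ * swap none (ξ.symm none)) none = none := by simp
        have hb : swap (none : Option α) none = 1 := swap_self _
        rw [map_equiv_removeNone, map_equiv_removeNone, ha, hb, one_mul,
          swap_mul_eq_mul_swap]
        have hc : ξ⁻¹ (ξ none) = none := by simp
        rw [hc, swap_comm]
        rfl
      rw [Finset.sum_eq_single (ξ.symm none), if_pos h8, h9, colSumD_eq, Fintype.card_fin]
      · simp
      · intro y _ hy
        rw [if_neg]
        intro h
        exact hy (by rw [← h]; simp)
      · simp
    have h6 : (∑ y, ∑ f ∈ (invCol (Fin m) ξ).filter (fun f => f y = f none),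
        ∏ a : α, XX (f (some a))) * W + W * (((n - m : ℕ) : MvPolynomial (Fin m) ℝ) * colSumD XX ξ +
      ∑ j, ∑ l ∈ Finset.univ.filter (fun l => j ≠ l), colK XX ξ j l) =
      (∑ y, (if y = none then (Fintype.card (Fin m) : MvPolynomial (Fin m) ℝ) else 1) *
        colSumD XX (ξ * swap none y)) * W + ((n - m : ℕ) : MvPolynomial (Fin m) ℝ) *
          colSumD XX ξ * W := by
      rw [← h3]; ring
    rw [h6, h5, Finset.mul_sum, Finset.sum_mul, Finset.sum_mul, ← Finset.sum_add_distrib]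
    refine Finset.sum_congr rfl fun y _ => ?_
    rw [colSumD_eq, MvPolynomial.smul_eq_C_mul]
    have h7 : (ξ * swap none y) none = ξ y := by simp
    rw [h7, Fintype.card_fin, Nat.cast_sub hmn]
    split_ifs <;> simp <;> ring
  rw [h4, map_sum]
  simp_rw [map_smul, smul_eq_mul]

theorem colSum_permCongr {β γ : Type*} [Fintype β] [DecidableEq β] [Fintype γ] [DecidableEq γ]
    {κ : Type*} [Fintype κ] [DecidableEq κ] {R : Type*} [CommRing R] (w : κ → R)
    (e : β ≃ γ) (ξ : Perm β) : colSum w (e.permCongr ξ) = colSum w ξ := by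
  unfold colSum
  refine Finset.sum_bij' (fun f _ => fun b => f (e b)) (fun f _ => fun c => f (e.symm c))
    ?_ ?_ ?_ ?_ ?_
  · intro f hf
    rw [mem_invCol] at hf ⊢
    intro b
    simpa using hf (e b)
  · intro f hf
    rw [mem_invCol] at hf ⊢
    intro b
    simpa using hf (e.symm b)
  · intro f _
    simp
  · intro f _
    simp
  · intro f _
    exact (Equiv.prod_comp e (fun c => w (f c))).symm

theorem ladG_permCongr {β γ : Type*} [Fintype β] [DecidableEq β] [Fintype γ] [DecidableEq γ]
    (m n : ℕ) (e : β ≃ γ) (ξ : Perm β) : ladG m n (e.permCongr ξ) = ladG m n ξ := by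
  unfold ladG
  rw [← Equiv.sum_comp e.permCongr]
  refine Finset.sum_congr rfl fun η _ => ?_
  have : e.permCongr ξ * e.permCongr η = e.permCongr (ξ * η) := by
    ext x; simp
  rw [this, colSum_permCongr, colSum_permCongr]

theorem lagL_main (n : ℕ) (hmn : m ≤ n) (β : Type) [Fintype β] : ∀ [DecidableEq β] (ξ : Perm β),
    lagL m (colSum XX ξ * wtP m (n - m)) = ladG m n ξ * lagL m (wtP m (n - m)) := by
  refine Fintype.induction_empty_option (P := fun β _ => ∀ [DecidableEq β] (ξ : Perm β),
    lagL m (colSum XX ξ * wtP m (n - m)) = ladG m n ξ * lagL m (wtP m (n - m))) ?_ ?_ ?_ β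
  · intro β γ _ e ih _ ξ
    let _ := Fintype.ofEquiv γ e.symm
    classical
    have := ih (e.symm.permCongr ξ)
    rw [colSum_permCongr, ladG_permCongr] at this
    convert this
  · intro _ ξ
    simp [colSum, ladG, invCol]
  · intro β _ ih inst ξ
    classical
    have hi : inst = (fun a b => Option.instDecidableEq a b) := Subsingleton.elim _ _
    subst hi
    rw [lagL_rec ξ n hmn, ladG_rec, Finset.sum_mul]
    refine Finset.sum_congr rfl fun y _ => ?_
    rw [ih]
    ring

end Poly

section Analysis

theorem gamma_nat (a : ℕ) :
    IntegrableOn (fun x : ℝ => x ^ a * Real.exp (-x)) (Set.Ici 0) ∧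
    ∫ x in Set.Ici (0 : ℝ), x ^ a * Real.exp (-x) = a.factorial := by
  have hs : (0 : ℝ) < (a : ℝ) + 1 := by positivity
  have h1 := Real.GammaIntegral_convergent hs
  have h2 := Real.Gamma_eq_integral hs
  have e : (fun x : ℝ => Real.exp (-x) * x ^ ((a : ℝ) + 1 - 1)) =
      fun x : ℝ => x ^ a * Real.exp (-x) := by
    funext x
    rw [add_sub_cancel_right, Real.rpow_natCast, mul_comm]
  rw [e] at h1 h2
  rw [Real.Gamma_nat_eq_factorial] at h2
  refine ⟨(integrableOn_Ici_iff_integrableOn_Ioi (by simp)).mpr h1, ?_⟩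
  rw [integral_Ici_eq_integral_Ioi, h2]

theorem orthant_eq (m : ℕ) : orthant m = Set.pi Set.univ (fun _ => Set.Ici (0 : ℝ)) := by
  ext q; simp only [orthant, Set.mem_ofPred_eq, Set.mem_pi, Set.mem_univ, Set.mem_Ici, true_imp_iff]

theorem restrict_orthant (m : ℕ) : (volume : Measure (Fin m → ℝ)).restrict (orthant m) =
    Measure.pi (fun _ => (volume : Measure ℝ).restrict (Set.Ici 0)) := by
  rw [orthant_eq, volume_pi, Measure.restrict_pi_pi]

theorem poly_integral (m : ℕ) (p : MvPolynomial (Fin m) ℝ) :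
    IntegrableOn (fun q : Fin m → ℝ => MvPolynomial.eval q p * ∏ k, Real.exp (-(q k)))
      (orthant m) ∧
    ∫ q in orthant m, MvPolynomial.eval q p * ∏ k, Real.exp (-(q k)) = lagL m p := by
  induction p using MvPolynomial.induction_on' with
  | monomial a c =>
    have e : (fun q : Fin m → ℝ => MvPolynomial.eval q (MvPolynomial.monomial a c) *
        ∏ k, Real.exp (-(q k))) =
        fun q => c * ∏ k, (q k ^ a k * Real.exp (-(q k))) := by
      funext q
      rw [MvPolynomial.eval_monomial, Finset.prod_mul_distrib, Finsupp.prod_fintype _ _ (by simp),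
        mul_assoc]
    rw [e, IntegrableOn, restrict_orthant, lagL_monomial]
    refine ⟨Integrable.const_mul (Integrable.fintype_prod
      (f := fun k x => x ^ a k * Real.exp (-x)) fun k => (gamma_nat (a k)).1) c, ?_⟩
    rw [integral_const_mul,
      integral_fintype_prod_eq_prod (f := fun k x => x ^ a k * Real.exp (-x))]
    congr 1
    exact Finset.prod_congr rfl fun k _ => (gamma_nat (a k)).2
  | add p q hp hq =>
    have e : (fun x : Fin m → ℝ => MvPolynomial.eval x (p + q) * ∏ k, Real.exp (-(x k))) =
        fun x => MvPolynomial.eval x p * (∏ k, Real.exp (-(x k))) +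
          MvPolynomial.eval x q * ∏ k, Real.exp (-(x k)) := by
      funext x; rw [map_add, add_mul]
    rw [e]
    refine ⟨hp.1.add hq.1, ?_⟩
    rw [integral_add hp.1 hq.1, hp.2, hq.2, map_add]

theorem eval_wtP (m e : ℕ) (q : Fin m → ℝ) :
    MvPolynomial.eval q (wtP m e) * ∏ k, Real.exp (-(q k)) =
      (vandermonde q) ^ 2 * ∏ k : Fin m, (q k ^ e * Real.exp (-(q k))) := by
  simp [wtP, vdmP, vandermonde, map_prod, Finset.prod_mul_distrib, mul_assoc]

theorem Lam_eq (m n : ℕ) : Lam m n = lagL m (wtP m (n - m)) := by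
  rw [← (poly_integral m _).2]
  unfold Lam
  simp_rw [eval_wtP]

theorem Lam_pos (m n : ℕ) : 0 < Lam m n := by
  have hIntOn := (poly_integral m (wtP m (n - m))).1
  simp_rw [eval_wtP] at hIntOn
  have hmeas : MeasurableSet (orthant m) := by
    rw [orthant_eq]
    exact MeasurableSet.univ_pi fun _ => measurableSet_Ici
  unfold Lam
  rw [setIntegral_pos_iff_support_of_nonneg_ae _ hIntOn]
  · let U : Set (Fin m → ℝ) := {q | (∀ k, 0 < q k) ∧ ∀ i j, i < j → q i < q j}
    have hU : IsOpen U := by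
      have : U = (⋂ k, {q | 0 < q k}) ∩ ⋂ i, ⋂ j, ⋂ (_ : i < j), {q | q i < q j} := by
        ext q; simp [U]
      rw [this]
      refine IsOpen.inter (isOpen_iInter_of_finite fun k =>
        isOpen_lt continuous_const (continuous_apply k)) ?_
      exact isOpen_iInter_of_finite fun i => isOpen_iInter_of_finite fun j =>
        isOpen_iInter_of_finite fun _ => isOpen_lt (continuous_apply i) (continuous_apply j)
    have hne : U.Nonempty := by
      refine ⟨fun k => (k : ℝ) + 1, fun k => by positivity, fun i j h => ?_⟩
      have : (i : ℕ) < (j : ℕ) := h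
      have : ((i : ℕ) : ℝ) < ((j : ℕ) : ℝ) := by exact_mod_cast this
      simpa using this
    refine lt_of_lt_of_le (hU.measure_pos volume hne) (measure_mono ?_)
    rintro q ⟨h1, h2⟩
    refine ⟨?_, fun k => (h1 k).le⟩
    rw [Function.mem_support]
    refine mul_ne_zero (pow_ne_zero _ ?_) ?_
    · unfold vandermonde
      refine Finset.prod_ne_zero_iff.mpr fun p hp => ?_
      exact sub_ne_zero.mpr (h2 _ _ (Finset.mem_filter.mp hp).2).ne'
    · refine Finset.prod_ne_zero_iff.mpr fun k _ => ?_
      exact mul_ne_zero (pow_ne_zero _ (h1 k).ne') (Real.exp_pos _).ne'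
  · filter_upwards [ae_restrict_mem hmeas] with q hq
    have hq : ∀ k, 0 ≤ q k := hq
    refine mul_nonneg (sq_nonneg _) (Finset.prod_nonneg fun k _ => ?_)
    exact mul_nonneg (pow_nonneg (hq k) _) (Real.exp_pos _).le

end Analysis

section Link

variable {r : ℕ} (ξ : Perm (Fin r)) {κ : Type*} [Fintype κ] [DecidableEq κ]

/-- Index type of the orbits. -/
abbrev OrbIx (ξ : Perm (Fin r)) : Type :=
  {c // c ∈ ξ.cycleFactorsFinset} ⊕ {x // x ∈ Finset.univ.filter fun x => ξ x = x}

/-- The orbit of a point. -/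
def toOrb (x : Fin r) : OrbIx ξ :=
  if h : ξ x = x then Sum.inr ⟨x, by simpa using h⟩
  else Sum.inl ⟨ξ.cycleOf x, Perm.cycleOf_mem_cycleFactorsFinset_iff.mpr (by simpa using h)⟩

theorem toOrb_inl (x : Fin r) (c : {c // c ∈ ξ.cycleFactorsFinset}) :
    toOrb ξ x = Sum.inl c ↔ x ∈ c.1.support := by
  unfold toOrb
  split_ifs with h
  · simp only [false_iff]
    intro hx
    have := Perm.mem_cycleFactorsFinset_support_le c.2 hx
    simp [h] at this
  · constructor
    · intro he
      have := congrArg Subtype.val (Sum.inl.inj he)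
      rw [← this]
      simpa [Perm.mem_support_cycleOf_iff] using h
    · intro hx
      congr 1
      ext1
      exact (Perm.cycle_is_cycleOf hx c.2).symm

theorem toOrb_inr (x : Fin r) (y : {x // x ∈ Finset.univ.filter fun x => ξ x = x}) :
    toOrb ξ x = Sum.inr y ↔ x = y.1 := by
  unfold toOrb
  split_ifs with h
  · simp [Subtype.ext_iff]
  · simp only [false_iff]
    rintro rfl
    exact h (Finset.mem_filter.mp y.2).2

theorem toOrb_surj : Function.Surjective (toOrb ξ) := by
  rintro (c | y)
  · obtain ⟨x, hx⟩ := (Perm.mem_cycleFactorsFinset_iff.mp c.2).1.nonempty_support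
    exact ⟨x, (toOrb_inl ξ x c).mpr hx⟩
  · exact ⟨y.1, (toOrb_inr ξ _ y).mpr rfl⟩

theorem toOrb_apply (x : Fin r) : toOrb ξ (ξ x) = toOrb ξ x := by
  rcases h : toOrb ξ x with c | y
  · rw [toOrb_inl] at h ⊢
    exact (Perm.mem_cycleFactorsFinset_support c.2 x).mpr h
  · rw [toOrb_inr] at h ⊢
    rw [h]
    exact (Finset.mem_filter.mp y.2).2

theorem sameCycle_of_toOrb {x y : Fin r} (h : toOrb ξ x = toOrb ξ y) : ξ.SameCycle x y := by
  rcases hx : toOrb ξ x with c | z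
  · rw [hx] at h
    rw [toOrb_inl] at hx
    have hy := (toOrb_inl ξ y c).mp h.symm
    have e1 := Perm.cycle_is_cycleOf hx c.2
    rw [e1, Perm.mem_support_cycleOf_iff] at hy
    exact hy.1
  · rw [hx] at h
    rw [toOrb_inr] at hx
    have hy := (toOrb_inr ξ y z).mp h.symm
    rw [hx, hy]

theorem inv_sameCycle {f : Fin r → κ} (hf : f ∈ invCol κ ξ) {x y : Fin r}
    (h : ξ.SameCycle x y) : f x = f y := by
  rw [mem_invCol] at hf
  obtain ⟨n, hn, rfl⟩ := h.exists_pow_eq'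
  clear hn h
  induction n with
  | zero => rfl
  | succ n ih => rw [pow_succ', Perm.mul_apply, hf, ← ih]

theorem colSum_eq_orbits {R : Type*} [CommRing R] (w : κ → R) :
    colSum w ξ = ((orbitSizes ξ).map fun t => ∑ j, w j ^ t).prod := by
  have h1 : colSum w ξ = ∑ g : OrbIx ξ → κ, ∏ a, w (g (toOrb ξ a)) := by
    unfold colSum
    refine Finset.sum_bij' (fun f _ => fun i => f (Function.surjInv (toOrb_surj ξ) i))
      (fun g _ => fun a => g (toOrb ξ a)) ?_ ?_ ?_ ?_ ?_
    · simp
    · intro g _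
      rw [mem_invCol]
      intro a
      rw [toOrb_apply]
    · intro f hf
      funext a
      refine inv_sameCycle ξ hf (sameCycle_of_toOrb ξ ?_)
      rw [Function.surjInv_eq (toOrb_surj ξ)]
    · intro g _
      funext i
      simp only
      rw [Function.surjInv_eq (toOrb_surj ξ)]
    · intro f hf
      refine Finset.prod_congr rfl fun a _ => ?_
      congr 1
      refine inv_sameCycle ξ hf (sameCycle_of_toOrb ξ ?_)
      rw [Function.surjInv_eq (toOrb_surj ξ)]
  have h2 : ∀ g : OrbIx ξ → κ, ∏ a, w (g (toOrb ξ a)) =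
      ∏ i, w (g i) ^ (Finset.univ.filter fun a => toOrb ξ a = i).card := by
    intro g
    rw [← Finset.prod_fiberwise Finset.univ (toOrb ξ)]
    refine Finset.prod_congr rfl fun i _ => ?_
    rw [Finset.prod_congr rfl (g := fun _ => w (g i)), Finset.prod_const]
    intro a ha
    rw [(Finset.mem_filter.mp ha).2]
  have h3 : colSum w ξ = ∏ i : OrbIx ξ, ∑ j,
      w j ^ (Finset.univ.filter fun a => toOrb ξ a = i).card := by
    rw [h1, Finset.prod_univ_sum]
    simp_rw [h2]
    rw [Fintype.piFinset_univ]
  rw [h3, Fintype.prod_sum_type]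
  unfold orbitSizes
  rw [Multiset.map_add, Multiset.prod_add]
  congr 1
  · rw [Perm.cycleType_def, Multiset.map_map]
    have : ∀ c : {c // c ∈ ξ.cycleFactorsFinset},
        (Finset.univ.filter fun a => toOrb ξ a = Sum.inl c) = c.1.support := by
      intro c; ext a; simp [toOrb_inl]
    simp_rw [this]
    exact Finset.prod_coe_sort ξ.cycleFactorsFinset
      (fun c => ∑ j, w j ^ c.support.card)
  · have : ∀ c : {x // x ∈ Finset.univ.filter fun x => ξ x = x},
        (Finset.univ.filter fun a => toOrb ξ a = Sum.inr c) = {c.1} := by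
      intro c; ext a; simp [toOrb_inr]
    simp_rw [this]
    simp

theorem colSum_one_cyc {n : ℕ} : colSum (fun _ : Fin n => (1 : ℝ)) ξ = (n : ℝ) ^ cyc ξ := by
  rw [colSum_eq_orbits]
  simp [orbitSizes, cyc, pow_add]

end Link

end LadderProof

/-- The matrix-integral expression for `P_{r_1…r_N}(m,n) = Σ_η m^{cyc η} n^{cyc (ξη)}`,
where `r_1,…,r_N` are the orbit sizes of `ξ`. -/
theorem ladderSum_eq_integral (r : ℕ) (hr : 1 ≤ r) (m n : ℕ) (hm : 0 < m) (hn : 0 < n)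
    (hmn : m ≤ n) (ξ : Equiv.Perm (Fin r)) :
    ((∑ η : Equiv.Perm (Fin r), (m : ℝ) ^ cyc η * (n : ℝ) ^ cyc (ξ * η)) : ℝ) =
      (1 / Lam m n) *
        ∫ q in orthant m, (vandermonde q) ^ 2 *
          (∏ k : Fin m, (q k ^ (n - m) * Real.exp (-(q k)))) *
          ((orbitSizes ξ).map fun t => ∑ j : Fin m, q j ^ t).prod := by
  have h1 : ∑ η : Equiv.Perm (Fin r), (m : ℝ) ^ cyc η * (n : ℝ) ^ cyc (ξ * η) = ladG m n ξ := by
    unfold ladG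
    simp_rw [colSum_one_cyc]
  have h2 := lagL_main n hmn (Fin r) ξ
  rw [← (poly_integral m _).2, ← Lam_eq] at h2
  have h3 : ∀ q : Fin m → ℝ, (vandermonde q) ^ 2 *
          (∏ k : Fin m, (q k ^ (n - m) * Real.exp (-(q k)))) *
          ((orbitSizes ξ).map fun t => ∑ j : Fin m, q j ^ t).prod =
      MvPolynomial.eval q (colSum MvPolynomial.X ξ * wtP m (n - m)) *
        ∏ k, Real.exp (-(q k)) := by
    intro q
    rw [← eval_wtP, ← colSum_eq_orbits, map_mul]
    have : MvPolynomial.eval q (colSum MvPolynomial.X ξ) = colSum q ξ := by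
      simp [colSum, map_sum, map_prod]
    rw [this]
    ring
  simp_rw [h3]
  rw [h2, h1]
  have := (Lam_pos m n).ne'
  field_simp
end

section
/- Let t_r denote the number of transitive pairs (σ,τ) ∈ S_r × S_r, so that h_r = t_r/(r−1)! is the total number of rooted hypermaps with r darts. Then h_1 = 1, h_2 = 3, h_3 = 13, h_4 = 71 and h_5 = 461. -/
/-- A pair of permutations is transitive if the subgroup they generate acts
transitively on `Fin r`. -/
def IsTransitivePair {r : ℕ} (σ τ : Equiv.Perm (Fin r)) : Prop :=
  ∀ x y : Fin r, ∃ g ∈ Subgroup.closure ({σ, τ} : Set (Equiv.Perm (Fin r))), g x = y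

/-- `t_r`: the number of transitive pairs `(σ,τ) ∈ S_r × S_r`. -/
noncomputable def transPairs (r : ℕ) : ℕ :=
  Nat.card {p : Equiv.Perm (Fin r) × Equiv.Perm (Fin r) // IsTransitivePair p.1 p.2}

/-- `h_r = t_r/(r-1)!`: the total number of rooted hypermaps with `r` darts. -/
noncomputable def totalHypermaps (r : ℕ) : ℚ :=
  (transPairs r : ℚ) / (r - 1).factorial

/-- The subset `{0} ∪ {i+1 : bit i of k is set}` of `Fin (m+1)`. -/
def hmMem {m : ℕ} (k : ℕ) : Fin (m + 1) → Bool :=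
  Fin.cases true (fun i => k.testBit i)

/-- `k` codes a proper subset containing `0` and stable under `σ`. -/
def hmInv {m : ℕ} (σ : Equiv.Perm (Fin (m + 1))) (k : ℕ) : Prop :=
  (∃ y : Fin (m + 1), hmMem k y = false) ∧ ∀ i, hmMem k (σ i) = hmMem k i

instance {m : ℕ} (σ : Equiv.Perm (Fin (m + 1))) (k : ℕ) : Decidable (hmInv σ k) := by
  unfold hmInv; infer_instance

/-- Bit mask of all the stable proper subsets. -/
def hmMask {m : ℕ} (σ : Equiv.Perm (Fin (m + 1))) : ℕ :=
  Nat.ofBits (fun k : Fin (2 ^ m) => decide (hmInv σ k))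

theorem hm_trans_iff {m : ℕ} (σ τ : Equiv.Perm (Fin (m + 1))) :
    IsTransitivePair σ τ ↔ ∀ k < 2 ^ m, ¬ (hmInv σ k ∧ hmInv τ k) := by
  classical
  constructor
  · rintro h k - ⟨⟨⟨y, hy⟩, hσ⟩, -, hτ⟩
    obtain ⟨g, hg, hgy⟩ := h 0 y
    have key : ∀ i, hmMem k (g i) = hmMem k i := by
      clear hgy
      induction hg using Subgroup.closure_induction with
      | mem x hx =>
        rcases hx with rfl | rfl
        · exact hσ
        · exact hτ
      | one => intro i; rfl
      | mul x y _ _ hx hy => intro i; rw [Equiv.Perm.mul_apply, hx, hy]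
      | inv x _ hx => intro i; rw [← hx]; simp
    have := key 0
    rw [hgy, hy] at this
    simp [hmMem] at this
  · intro h
    by_contra hn
    set G := Subgroup.closure ({σ, τ} : Set (Equiv.Perm (Fin (m + 1)))) with hG
    have hσG : σ ∈ G := Subgroup.subset_closure (by simp)
    have hτG : τ ∈ G := Subgroup.subset_closure (by simp)
    let P : Fin (m + 1) → Prop := fun y => ∃ g ∈ G, g 0 = y
    have hstab : ∀ g ∈ G, ∀ i, P (g i) ↔ P i := by
      intro g hg i
      constructor
      · rintro ⟨a, ha, h0⟩
        exact ⟨g⁻¹ * a, G.mul_mem (G.inv_mem hg) ha, by simp [h0]⟩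
      · rintro ⟨a, ha, h0⟩
        exact ⟨g * a, G.mul_mem hg ha, by simp [h0]⟩
    have hP0 : P 0 := ⟨1, G.one_mem, rfl⟩
    have hex : ∃ y, ¬ P y := by
      by_contra hall
      push Not at hall
      apply hn
      intro x y
      obtain ⟨a, ha, hax⟩ := hall x
      obtain ⟨b, hb, hby⟩ := hall y
      refine ⟨b * a⁻¹, G.mul_mem hb (G.inv_mem ha), ?_⟩
      simp [← hax, hby]
    let k := Nat.ofBits (fun i : Fin m => decide (P i.succ))
    have hk : ∀ y : Fin (m + 1), hmMem k y = decide (P y) := by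
      intro y
      refine Fin.cases ?_ (fun i => ?_) y
      · simp [hmMem, hP0]
      · simp [hmMem, k, Nat.testBit_ofBits_lt]
    refine h k (Nat.ofBits_lt_two_pow _) ⟨⟨?_, ?_⟩, ?_, ?_⟩
    · obtain ⟨y, hy⟩ := hex
      exact ⟨y, by simp [hk, hy]⟩
    · intro i
      simp [hk, hstab σ hσG]
    · obtain ⟨y, hy⟩ := hex
      exact ⟨y, by simp [hk, hy]⟩
    · intro i
      simp [hk, hstab τ hτG]

theorem hm_mask_iff {m : ℕ} (σ τ : Equiv.Perm (Fin (m + 1))) :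
    IsTransitivePair σ τ ↔ hmMask σ &&& hmMask τ = 0 := by
  rw [hm_trans_iff]
  constructor
  · intro h
    apply Nat.eq_of_testBit_eq
    intro k
    rw [Nat.testBit_land, Nat.zero_testBit]
    by_cases hk : k < 2 ^ m
    · have := h k hk
      simp only [hmMask, Nat.testBit_ofBits_lt _ _ hk]
      simpa using this
    · simp [hmMask, Nat.testBit_ofBits_ge _ _ (not_lt.mp hk)]
  · rintro h k hk ⟨h1, h2⟩
    have := congrArg (fun n => Nat.testBit n k) h
    simp [hmMask, Nat.testBit_ofBits_lt _ _ hk, h1, h2] at this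

/-- Number of pairs of entries of the list with disjoint masks. -/
def hmCount (L : List ℕ) : ℕ :=
  (L.map fun a => (L.map fun b => if Nat.beq (Nat.land a b) 0 then 1 else 0).sum).sum

theorem hm_count {m : ℕ} (L : List ℕ)
    (hL : (Finset.univ : Finset (Equiv.Perm (Fin (m + 1)))).val.map hmMask = (L : Multiset ℕ)) :
    transPairs (m + 1) = hmCount L := by
  classical
  have e : hmCount L = ((L : Multiset ℕ).map fun a =>
      ((L : Multiset ℕ).map fun b => if a &&& b = 0 then 1 else 0).sum).sum := by
    simp only [Multiset.map_coe, Multiset.sum_coe, hmCount]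
    simp
  rw [e, ← hL]
  simp only [Multiset.map_map, Function.comp_def]
  unfold transPairs
  simp only [hm_mask_iff]
  rw [Nat.card_eq_fintype_card, Fintype.card_subtype, Finset.card_filter,
    ← Finset.univ_product_univ, Finset.sum_product]
  rfl

/-- The masks of all permutations, as a list. -/
def hmList (m : ℕ) : List ℕ :=
  (permsOfList (List.finRange (m + 1))).map hmMask

theorem hm_list (m : ℕ) :
    (Finset.univ : Finset (Equiv.Perm (Fin (m + 1)))).val.map hmMask = (hmList m : Multiset ℕ) := by
  have : (Finset.univ : Finset (Equiv.Perm (Fin (m + 1)))) =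
      ⟨permsOfList (List.finRange (m + 1)), nodup_permsOfList (List.nodup_finRange _)⟩ := by
    ext σ
    refine ⟨fun _ => ?_, fun _ => Finset.mem_univ _⟩
    exact mem_permsOfList_of_mem fun x _ => List.mem_finRange x
  rw [this, hmList]
  rfl

theorem hm_list_four : hmList 4 =
    [32767, 28687, 17347, 16387, 19507, 16387, 6553, 4105, 385, 1, 2065, 1, 9637, 8197,
    385, 1, 1057, 1, 10837, 8197, 577, 1, 2065, 1, 10922, 8202, 642, 2, 2082, 2, 2184, 8,
    128, 0, 2048, 0, 8352, 8192, 128, 0, 32, 0, 10752, 8192, 512, 0, 2048, 0, 19660,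
    16396, 16576, 16384, 19456, 16384, 2184, 8, 128, 0, 2048, 0, 1156, 4, 128, 0, 1024, 0,
    2116, 4, 64, 0, 2048, 0, 28912, 28672, 16576, 16384, 16432, 16384, 4240, 4096, 128, 0,
    16, 0, 8352, 8192, 128, 0, 32, 0, 8272, 8192, 64, 0, 16, 0, 32512, 28672, 17152,
    16384, 19456, 16384, 6400, 4096, 256, 0, 2048, 0, 9472, 8192, 256, 0, 1024, 0, 10752,
    8192, 512, 0, 2048, 0] := by
  decide +kernel

theorem hm_value (m t : ℕ) (h : hmCount (hmList m) = t) : transPairs (m + 1) = t :=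
  (hm_count _ (hm_list m)).trans h

/-- The total numbers of rooted hypermaps with 1, 2, 3, 4 and 5 darts are
1, 3, 13, 71 and 461 respectively. -/
theorem totalHypermaps_values :
    totalHypermaps 1 = 1 ∧ totalHypermaps 2 = 3 ∧ totalHypermaps 3 = 13 ∧
      totalHypermaps 4 = 71 ∧ totalHypermaps 5 = 461 := by
  have h1 : transPairs 1 = 1 := hm_value 0 _ (by decide +kernel)
  have h2 : transPairs 2 = 3 := hm_value 1 _ (by decide +kernel)
  have h3 : transPairs 3 = 26 := hm_value 2 _ (by decide +kernel)
  have h4 : transPairs 4 = 426 := hm_value 3 _ (by decide +kernel)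
  have h5 : transPairs 5 = 11064 := hm_value 4 _ (by rw [hm_list_four]; decide +kernel)
  simp only [totalHypermaps, h1, h2, h3, h4, h5]
  norm_num [Nat.factorial]
end
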